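/- arXiv:2504.00919 — 4 statements merged into one kernel-verified Lean document; each statement's English description precedes it below -/
import Mathlib

section
/- Fix α, τ, τ̃ > 0 and u ∈ ℝ. For x ∈ ℝ let μ_x be the product probability measure on ℝ² whose first factor is Laplace(trim_τ(x), 4τ/α) and whose second factor is Laplace(trim_{τ̃}(x·u), 4τ̃/α). Then for all x, x' ∈ ℝ and every Borel set A ⊆ ℝ² one has μ_x(A) ≤ e^α · μ_{x'}(A). Likewise, if for x ∈ ℝ one sets ν_x := Laplace(trim_τ(x²), 2τ/α), then ν_x(B) ≤ e^α · ν_{x'}(B) for all x, x' ∈ ℝ and every Borel set B ⊆ ℝ. (This is the α-local-differential-privacy property of the interactive mechanism for estimating a covariance coefficient σ_j: in step i with lag j ≥ 1, u plays the role of the previously released value Z_{i−j}; the second claim is the case j = 0.) -/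
/-!
Moving the location of a Laplace density of scale `b` by `d` changes it by a factor of at most
`exp (d / b)`, by the triangle inequality. Values truncated to `[-c, c]` differ by at most `2 * c`,
so scale `2 * c / ε` costs a privacy budget of `ε`. Budgets add up under products: each coordinate
of the pair has the doubled scale, which spends half of `α`.
-/

open MeasureTheory Real

/-- `trim c x` truncates `x` to the interval `[-c, c]`. -/
noncomputable def trim (c x : ℝ) : ℝ := max (-c) (min x c)

/-- The Laplace distribution with location `m` and scale `b`. -/
noncomputable def laplace (m b : ℝ) : Measure ℝ :=
  volume.withDensity fun z => ENNReal.ofReal ((1 / (2 * b)) * Real.exp (-|z - m| / b))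

theorem trim_mem_Icc {c : ℝ} (hc : 0 ≤ c) (x : ℝ) : trim c x ∈ Set.Icc (-c) c :=
  ⟨le_max_left _ _, max_le (neg_le_self hc) (min_le_right _ _)⟩

theorem abs_trim_sub_trim_le {c : ℝ} (hc : 0 ≤ c) (x y : ℝ) : |trim c x - trim c y| ≤ 2 * c := by
  have h := Real.dist_le_of_mem_Icc (trim_mem_Icc hc x) (trim_mem_Icc hc y)
  rwa [Real.dist_eq, sub_neg_eq_add, ← two_mul] at h

instance sFinite_laplace (m b : ℝ) : SFinite (laplace m b) := by
  unfold laplace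
  infer_instance

theorem exp_neg_abs_sub_div_le {b : ℝ} (hb : 0 < b) (m m' z : ℝ) :
    exp (-|z - m| / b) ≤ exp (|m - m'| / b) * exp (-|z - m'| / b) := by
  have triangle : -|z - m| ≤ |m - m'| + -|z - m'| := by linarith [abs_sub_le z m m']
  rw [← exp_add, ← add_div]
  gcongr

theorem laplace_le_smul_laplace {b : ℝ} (hb : 0 < b) (m m' : ℝ) :
    laplace m b ≤ ENNReal.ofReal (exp (|m - m'| / b)) • laplace m' b := by
  unfold laplace
  rw [← withDensity_smul _ (by fun_prop)]
  refine withDensity_mono (ae_of_all _ fun z => ?_)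
  rw [Pi.smul_apply, smul_eq_mul, ← ENNReal.ofReal_mul (exp_nonneg _), mul_left_comm]
  exact ENNReal.ofReal_le_ofReal
    (mul_le_mul_of_nonneg_left (exp_neg_abs_sub_div_le hb m m' z) (by positivity))

section LocalPrivacy

variable {X Y Z : Type*} [MeasurableSpace Y] [MeasurableSpace Z]

/-- `ε`-local differential privacy of a randomised mechanism `M`, where `M x` is the law of the
output on input `x`; the order on measures encodes the bound over all measurable events. -/
def IsLDP (ε : ℝ) (M : X → Measure Y) : Prop :=
  ∀ x x', M x ≤ ENNReal.ofReal (exp ε) • M x'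

theorem IsLDP.prod {ε δ : ℝ} {M : X → Measure Y} {N : X → Measure Z} [∀ x, SFinite (N x)]
    (hM : IsLDP ε M) (hN : IsLDP δ N) : IsLDP (ε + δ) fun x => (M x).prod (N x) := by
  intro x x'
  calc (M x).prod (N x)
      ≤ (ENNReal.ofReal (exp ε) • M x').prod (ENNReal.ofReal (exp δ) • N x') :=
        Measure.prod_mono (hM x x') (hN x x')
    _ = ENNReal.ofReal (exp (ε + δ)) • (M x').prod (N x') := by
        rw [Measure.prod_smul_left, Measure.prod_smul_right, smul_smul,
          ← ENNReal.ofReal_mul (exp_nonneg _), ← exp_add]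

theorem isLDP_laplace {f : X → ℝ} {Δ b : ℝ} (hb : 0 < b)
    (hf : ∀ x x', |f x - f x'| ≤ Δ) : IsLDP (Δ / b) fun x => laplace (f x) b := by
  intro x x'
  refine (laplace_le_smul_laplace hb (f x) (f x')).trans ?_
  gcongr
  exact hf x x'

theorem isLDP_laplace_trim (f : X → ℝ) {c ε : ℝ} (hc : 0 < c) (hε : 0 < ε) :
    IsLDP ε fun x => laplace (trim c (f x)) (2 * c / ε) := by
  have h := isLDP_laplace (b := 2 * c / ε) (by positivity)
    fun x x' => abs_trim_sub_trim_le hc.le (f x) (f x')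
  rwa [div_div_cancel₀ (by positivity)] at h

end LocalPrivacy

/-- α-LDP property of the interactive mechanism for estimating a covariance coefficient. -/
theorem ldp_interactive_covariance_mechanism
    (α τ τ' : ℝ) (hα : 0 < α) (hτ : 0 < τ) (hτ' : 0 < τ') (u : ℝ) :
    (∀ x x' : ℝ, ∀ A : Set (ℝ × ℝ), MeasurableSet A →
      ((laplace (trim τ x) (4 * τ / α)).prod
          (laplace (trim τ' (x * u)) (4 * τ' / α))) A ≤
        ENNReal.ofReal (Real.exp α) *
          ((laplace (trim τ x') (4 * τ / α)).prod
            (laplace (trim τ' (x' * u)) (4 * τ' / α))) A) ∧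
    (∀ x x' : ℝ, ∀ B : Set ℝ, MeasurableSet B →
      laplace (trim τ (x ^ 2)) (2 * τ / α) B ≤
        ENNReal.ofReal (Real.exp α) * laplace (trim τ (x' ^ 2)) (2 * τ / α) B) := by
  have half_budget (f : ℝ → ℝ) {c : ℝ} (hc : 0 < c) :
      IsLDP (α / 2) fun x => laplace (trim c (f x)) (4 * c / α) := by
    have scale_eq : 4 * c / α = 2 * c / (α / 2) := by ring
    rw [scale_eq]
    exact isLDP_laplace_trim f hc (half_pos hα)
  have pair_private := (half_budget (fun x => x) hτ).prod (half_budget (fun x => x * u) hτ')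
  rw [add_halves] at pair_private
  exact ⟨fun x x' A _ => pair_private x x' A,
    fun x x' B _ => isLDP_laplace_trim (fun y => y ^ 2) hτ hα x x' B⟩
end

section
/- Let δ > 0 and M₁ > 0, and let R : ℕ → ℕ satisfy 0 < R(n) < n for all n and R(n)/n → 0. There is a constant c > 0, depending only on M₁ and δ, such that for every α ∈ (0,1) there is N ∈ ℕ with the following property for all n ≥ N. Set τ_n := (8 log^{1+δ} n)^{1/2} and τ̃_n := 16 log^{1+δ}(n) · τ_n². Let (σ_k)_{k∈ℤ} be any valid autocovariance sequence of size n with Σ_{k∈ℤ} σ_k² ≤ M₁, let X = (X_1,…,X_n) be the corresponding centered Gaussian vector, and, independently of X, let ξ_1,…,ξ_n be i.i.d. Laplace(0, 4τ_n/α) and ξ̃_1,…,ξ̃_n be i.i.d. Laplace(0, 4τ̃_n/α), with (ξ_i) and (ξ̃_i) mutually independent. Define Z_i := trim_{τ_n}(X_i) + ξ_i for i = 1,…,n, and for an integer j with 1 ≤ j ≤ R(n) the estimator σ̂_j := (1/(n−j)) Σ_{i=j+1}^n [ trim_{τ̃_n}( X_i · Z_{i−j} ) + ξ̃_i ]. Then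 E[(σ̂_j − σ_j)²] ≤ c · max{ 1/n, log^{4+4δ}(n)/(n α²) } for every such j. -/
open MeasureTheory ProbabilityTheory Real

/-- The `n × n` Toeplitz matrix `(σ_{|i-k|})` built from a sequence `σ : ℤ → ℝ`. -/
noncomputable def toeplitz (n : ℕ) (σ : ℤ → ℝ) : Matrix (Fin n) (Fin n) ℝ :=
  fun i k => σ |(i : ℤ) - (k : ℤ)|

/-- `μ` is the centered Gaussian measure on `ℝⁿ` with covariance matrix `S`
(Cramér–Wold characterisation: every linear functional is Gaussian with the
corresponding variance). -/
def IsCenteredGaussian {n : ℕ} (μ : Measure (Fin n → ℝ)) (S : Matrix (Fin n) (Fin n) ℝ) : Prop :=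
  ∀ a : Fin n → ℝ,
    μ.map (fun x => ∑ i, a i * x i) =
      gaussianReal 0 (∑ i, ∑ k, a i * S i k * a k).toNNReal

/-- The interactive private estimator of the covariance coefficient `σ_j`:
`w = (X, ξ, ξ̃)` and
`σ̂_j = (1/(n-j)) ∑_{i=j+1}^n [ trim_{τ'}(X_i (trim_τ(X_{i-j}) + ξ_{i-j})) + ξ̃_i ]`. -/
noncomputable def sigmaHat (n j : ℕ) (τ τ' : ℝ)
    (w : (Fin n → ℝ) × (Fin n → ℝ) × (Fin n → ℝ)) : ℝ :=
  ((n : ℝ) - j)⁻¹ *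
    ∑ i : Fin (n - j),
      (trim τ'
          (w.1 ⟨i.1 + j, by have := i.isLt; omega⟩ *
            (trim τ (w.1 ⟨i.1, by have := i.isLt; omega⟩) +
              w.2.1 ⟨i.1, by have := i.isLt; omega⟩)) +
        w.2.2 ⟨i.1 + j, by have := i.isLt; omega⟩)

/-!
Multiplied by `n - j`, the error `σ̂ⱼ - σⱼ` is the sum of four terms: the sampling error
`∑ (XᵢXᵢ₋ⱼ - σⱼ)`, the noise terms `∑ Xᵢξᵢ₋ⱼ` and `∑ ξ̃ᵢ`, and the trimming errors. By Isserlis'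
formula the first has second moment at most `2 (n - j) ∑ σₖ²`, and the noise terms are sums of
orthogonal variables. The error of a single trimming vanishes unless some `|X|` exceeds `τ` or `|ξ|`
exceeds `15 log^{1+δ}(n) τ`, which has probability at most `5 n⁻⁴`, while its fourth moment is
polylogarithmic in `n`; so by Cauchy–Schwarz its second moment is at most `1 / n`. The noise terms
then dominate, the variance of `ξ̃ᵢ` being of order `log^{4+4δ}(n) / α²`.
-/

section Gaussian

lemma integral_even_pow_gaussianReal (v : NNReal) (k : ℕ) :
    ∫ x, x ^ (2 * k) ∂gaussianReal 0 v = (2 * k - 1).doubleFactorial * (v : ℝ) ^ k := by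
  rcases eq_or_ne v 0 with rfl | hv
  · rcases k with _ | k <;> simp
  have : (0 : ℝ) < v := NNReal.coe_pos.2 hv.bot_lt
  have hhalf : ∫ x in Set.Ioi (0 : ℝ), x ^ (2 * k) * rexp (-(2 * v : ℝ)⁻¹ * x ^ 2) =
      (2 * v : ℝ) ^ (k + 1 / 2 : ℝ) * (1 / 2) * Gamma (k + 1 / 2) := by
    have h := integral_rpow_mul_exp_neg_mul_rpow (p := 2) (q := (2 * k : ℕ)) (b := (2 * v : ℝ)⁻¹)
      two_pos (by linarith [(2 * k).cast_nonneg (α := ℝ)]) (by positivity)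
    simp only [rpow_natCast, rpow_two] at h
    rw [h, inv_rpow (by positivity), ← rpow_neg (by positivity)]
    congr 2 <;> push_cast <;> ring_nf
  calc ∫ x, x ^ (2 * k) ∂gaussianReal 0 v
      = ∫ x, (√(2 * π * v))⁻¹ * (|x| ^ (2 * k) * rexp (-(2 * v : ℝ)⁻¹ * |x| ^ 2)) := by
        rw [integral_gaussianReal_eq_integral_smul hv]
        congr with x
        rw [gaussianPDFReal, (even_two_mul k).pow_abs, sq_abs, smul_eq_mul]
        ring_nf
    _ = (√(2 * π * v))⁻¹ * (2 * ((2 * v : ℝ) ^ (k + 1 / 2 : ℝ) * (1 / 2) * Gamma (k + 1 / 2))) := by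
        rw [integral_const_mul, integral_comp_abs
          (f := fun x => x ^ (2 * k) * rexp (-(2 * v : ℝ)⁻¹ * x ^ 2)), hhalf]
    _ = _ := by
        rw [Gamma_nat_add_half, rpow_add (by positivity), rpow_natCast, ← sqrt_eq_rpow,
          show 2 * π * (v : ℝ) = 2 * v * π by ring, sqrt_mul (by positivity), mul_pow]
        field_simp

end Gaussian

section Laplace

variable {b : ℝ}

lemma integral_comp_abs_laplace (hb : 0 < b) (f : ℝ → ℝ) :
    ∫ z, f |z| ∂laplace 0 b = b⁻¹ * ∫ z in Set.Ioi 0, rexp (-(b⁻¹ * z)) * f z := by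
  rw [laplace, integral_withDensity_eq_integral_toReal_smul (by fun_prop)
    (ae_of_all _ fun _ => ENNReal.ofReal_lt_top)]
  calc ∫ z, (ENNReal.ofReal (1 / (2 * b) * rexp (-|z - 0| / b))).toReal • f |z|
      = ∫ z, (2 * b)⁻¹ * (rexp (-(b⁻¹ * |z|)) * f |z|) := by
        congr with z
        rw [ENNReal.toReal_ofReal (by positivity), sub_zero, smul_eq_mul, one_div, mul_assoc,
          neg_div, div_eq_inv_mul]
    _ = b⁻¹ * ∫ z in Set.Ioi 0, rexp (-(b⁻¹ * z)) * f z := by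
        rw [integral_const_mul, integral_comp_abs (f := fun z => rexp (-(b⁻¹ * z)) * f z), mul_inv]
        ring

lemma integral_abs_pow_laplace (hb : 0 < b) (k : ℕ) :
    ∫ z, |z| ^ k ∂laplace 0 b = k.factorial * b ^ k := by
  have h := integral_rpow_mul_exp_neg_mul_Ioi (a := k + 1) (r := b⁻¹) (by positivity)
    (inv_pos.2 hb)
  simp only [add_sub_cancel_right, rpow_natCast, one_div, inv_inv, Gamma_nat_eq_factorial] at h
  rw [integral_comp_abs_laplace hb (fun z => z ^ k)]
  simp only [mul_comm (rexp _), h]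
  rw [rpow_add_one hb.ne', rpow_natCast]
  field_simp

lemma integrable_abs_pow_laplace (hb : 0 < b) (k : ℕ) :
    Integrable (fun z => |z| ^ k) (laplace 0 b) := by
  refine .of_integral_ne_zero ?_
  rw [integral_abs_pow_laplace hb]
  positivity

lemma isProbabilityMeasure_laplace (hb : 0 < b) : IsProbabilityMeasure (laplace 0 b) := by
  have : IsFiniteMeasure (laplace 0 b) :=
    (integrable_const_iff_isFiniteMeasure one_ne_zero).1
      (by simpa using integrable_abs_pow_laplace hb 0)
  exact isProbabilityMeasure_iff_real.2 (by simpa using integral_abs_pow_laplace hb 0)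

lemma memLp_id_laplace (hb : 0 < b) {k : ℕ} (hk : k ≠ 0) : MemLp id k (laplace 0 b) := by
  rw [← integrable_norm_rpow_iff (by fun_prop) (by exact_mod_cast hk) (by simp)]
  simpa using integrable_abs_pow_laplace hb k

lemma measureReal_lt_abs_laplace (hb : 0 < b) {t : ℝ} (ht : 0 ≤ t) :
    (laplace 0 b).real {z | t < |z|} = rexp (-t / b) := by
  have hmeas : MeasurableSet {z : ℝ | t < |z|} := measurableSet_lt (by fun_prop) (by fun_prop)
  calc (laplace 0 b).real {z | t < |z|}
      = ∫ z, (Set.Ioi t).indicator 1 |z| ∂laplace 0 b := (integral_indicator_one hmeas).symm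
    _ = b⁻¹ * ∫ z in Set.Ioi 0, (Set.Ioi t).indicator (fun z => rexp (-b⁻¹ * z)) z := by
        rw [integral_comp_abs_laplace hb]
        congr with z
        by_cases hz : z ∈ Set.Ioi t <;> simp [hz]
    _ = b⁻¹ * ∫ z in Set.Ioi t, rexp (-b⁻¹ * z) := by
        rw [setIntegral_indicator measurableSet_Ioi, Set.Ioi_inter_Ioi, max_eq_right ht]
    _ = rexp (-t / b) := by
        rw [integral_exp_mul_Ioi (neg_lt_zero.2 (inv_pos.2 hb))]
        field_simp

lemma integral_id_laplace (b : ℝ) : ∫ z, z ∂laplace 0 b = 0 := by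
  set p : ℝ → ℝ := fun z => (ENNReal.ofReal (1 / (2 * b) * rexp (-|z - 0| / b))).toReal
  rw [laplace, integral_withDensity_eq_integral_toReal_smul (by fun_prop)
    (ae_of_all _ fun _ => ENNReal.ofReal_lt_top)]
  have hodd : ∀ z, p (-z) • (-z) = -(p z • z) := fun z => by simp [p]
  have h := integral_neg_eq_self (fun z => p z • z) volume
  simp only [hodd, integral_neg] at h
  linarith

end Laplace

namespace IsCenteredGaussian

open Matrix

variable {n : ℕ} {μ : Measure (Fin n → ℝ)} {S : Matrix (Fin n) (Fin n) ℝ}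

lemma hasLaw_dotProduct (h : IsCenteredGaussian μ S) (a : Fin n → ℝ) :
    HasLaw (fun x => a ⬝ᵥ x) (gaussianReal 0 (a ⬝ᵥ S *ᵥ a).toNNReal) μ where
  map_eq := by
    have hquad : a ⬝ᵥ S *ᵥ a = ∑ i, ∑ k, a i * S i k * a k := by
      simp only [dotProduct, mulVec, Finset.mul_sum, mul_assoc]
    rw [hquad]
    exact h a

lemma hasLaw_eval (h : IsCenteredGaussian μ S) (p : Fin n) :
    HasLaw (fun x => x p) (gaussianReal 0 (S p p).toNNReal) μ := by
  simpa using h.hasLaw_dotProduct (Pi.single p 1)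

lemma isProbabilityMeasure (h : IsCenteredGaussian μ S) : IsProbabilityMeasure μ :=
  (h.hasLaw_dotProduct 0).isProbabilityMeasure

lemma memLp_eval (h : IsCenteredGaussian μ S) (p : Fin n) {r : ENNReal} (hr : r ≠ ⊤) :
    MemLp (fun x => x p) r μ := by
  have hid := memLp_id_gaussianReal' (μ := 0) (v := (S p p).toNNReal) r hr
  rw [← (h.hasLaw_eval p).map_eq] at hid
  exact hid.comp_of_map (h.hasLaw_eval p).aemeasurable

lemma integral_dotProduct_pow (h : IsCenteredGaussian μ S) (hS : S.PosSemidef) (a : Fin n → ℝ)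
    (k : ℕ) :
    ∫ x, (a ⬝ᵥ x) ^ (2 * k) ∂μ = (2 * k - 1).doubleFactorial * (a ⬝ᵥ S *ᵥ a) ^ k := by
  have hQ : 0 ≤ a ⬝ᵥ S *ᵥ a := by simpa using hS.dotProduct_mulVec_nonneg a
  rw [← coe_toNNReal _ hQ, ← integral_even_pow_gaussianReal]
  exact (h.hasLaw_dotProduct a).integral_comp (f := fun y => y ^ (2 * k)) (by fun_prop)

lemma memLp_dotProduct (h : IsCenteredGaussian μ S) (a : Fin n → ℝ) {r : ENNReal} (hr : r ≠ ⊤) :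
    MemLp (fun x => a ⬝ᵥ x) r μ :=
  memLp_finsetSum _ fun i _ => (h.memLp_eval i hr).const_mul (a i)

lemma integrable_dotProduct_pow (h : IsCenteredGaussian μ S) (a : Fin n → ℝ) {k : ℕ}
    (hk : Even k) : Integrable (fun x => (a ⬝ᵥ x) ^ k) μ := by
  have := h.isProbabilityMeasure
  have habs := (h.memLp_dotProduct a (ENNReal.natCast_ne_top k)).integrable_norm_pow'
  simpa only [Real.norm_eq_abs, hk.pow_abs] using habs

lemma integral_eval_mul_eval (h : IsCenteredGaussian μ S) (hS : S.PosSemidef) (p q : Fin n) :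
    ∫ x, x p * x q ∂μ = S p q := by
  have hsymm : S q p = S p q := by simpa using hS.isHermitian.apply p q
  set v : ℝ → Fin n → ℝ := fun a => Pi.single p 1 + a • Pi.single q 1
  have hv (a : ℝ) (x : Fin n → ℝ) : v a ⬝ᵥ x = x p + a * x q := by simp [v, add_dotProduct]
  have hquad (a : ℝ) : v a ⬝ᵥ S *ᵥ v a = S p p + 2 * a * S p q + a ^ 2 * S q q := by
    simp only [v, add_dotProduct, smul_dotProduct, single_dotProduct, mulVec_add, mulVec_smul,
      mulVec_single_one, Pi.add_apply, Pi.smul_apply, col_apply, smul_eq_mul, hsymm]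
    ring
  have hint (a : ℝ) := (h.integrable_dotProduct_pow (v a) even_two).const_mul a
  have hpolar (x : Fin n → ℝ) :
      4 * (x p * x q) = ∑ a ∈ ({1, -1} : Finset ℝ), a * (v a ⬝ᵥ x) ^ 2 := by
    simp only [hv, Finset.sum_pair (show (1 : ℝ) ≠ -1 by norm_num)]
    ring
  have hmoment (a : ℝ) : ∫ x, (v a ⬝ᵥ x) ^ 2 ∂μ = v a ⬝ᵥ S *ᵥ v a := by
    simpa using h.integral_dotProduct_pow hS (v a) 1
  refine mul_left_cancel₀ (four_ne_zero (α := ℝ)) ?_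
  rw [← integral_const_mul]
  simp only [hpolar]
  rw [integral_finsetSum _ fun a _ => hint a]
  simp only [integral_const_mul, hmoment, hquad,
    Finset.sum_pair (show (1 : ℝ) ≠ -1 by norm_num)]
  ring

-- Isserlis' formula, obtained by polarizing the fourth moment of linear forms.
lemma integral_eval_mul_four (h : IsCenteredGaussian μ S) (hS : S.PosSemidef) (p q r s : Fin n) :
    ∫ x, x p * x q * (x r * x s) ∂μ = S p q * S r s + S p r * S q s + S p s * S q r := by
  have hsymm (i k : Fin n) : S k i = S i k := by simpa using hS.isHermitian.apply i k
  set v : ℝ → ℝ → ℝ → Fin n → ℝ := fun a b c =>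
    Pi.single p 1 + a • Pi.single q 1 + b • Pi.single r 1 + c • Pi.single s 1
  have hv (a b c : ℝ) (x : Fin n → ℝ) : v a b c ⬝ᵥ x = x p + a * x q + b * x r + c * x s := by
    simp [v, add_dotProduct]
  have hquad (a b c : ℝ) : v a b c ⬝ᵥ S *ᵥ v a b c =
      S p p + a ^ 2 * S q q + b ^ 2 * S r r + c ^ 2 * S s s +
        2 * (a * S p q + b * S p r + c * S p s + a * b * S q r + a * c * S q s +
          b * c * S r s) := by
    simp only [v, add_dotProduct, smul_dotProduct, single_dotProduct, mulVec_add, mulVec_smul,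
      mulVec_single_one, Pi.add_apply, Pi.smul_apply, col_apply, smul_eq_mul, hsymm p q,
      hsymm p r, hsymm p s, hsymm q r, hsymm q s, hsymm r s]
    ring
  have hint (a b c : ℝ) :=
    (h.integrable_dotProduct_pow (v a b c) (by decide : Even 4)).const_mul (a * b * c)
  have hpolar (x : Fin n → ℝ) : 192 * (x p * x q * (x r * x s)) =
      ∑ a ∈ ({1, -1} : Finset ℝ), ∑ b ∈ ({1, -1} : Finset ℝ), ∑ c ∈ ({1, -1} : Finset ℝ),
        a * b * c * (v a b c ⬝ᵥ x) ^ 4 := by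
    simp only [hv, Finset.sum_pair (show (1 : ℝ) ≠ -1 by norm_num)]
    ring
  have hmoment (a b c : ℝ) : ∫ x, (v a b c ⬝ᵥ x) ^ 4 ∂μ = 3 * (v a b c ⬝ᵥ S *ᵥ v a b c) ^ 2 :=
    h.integral_dotProduct_pow hS (v a b c) 2
  refine mul_left_cancel₀ (show (192 : ℝ) ≠ 0 by norm_num) ?_
  rw [← integral_const_mul]
  simp only [hpolar]
  simp (discharger := intros; fun_prop) only [integral_finsetSum]
  simp only [integral_const_mul, hmoment, hquad,
    Finset.sum_pair (show (1 : ℝ) ≠ -1 by norm_num)]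
  ring

end IsCenteredGaussian

section SecondMoments

variable {Ω : Type*} [MeasurableSpace Ω] {P : Measure Ω}

lemma memLp_mul_of_memLp_two_mul {f g : Ω → ℝ} {p : ENNReal} (hf : MemLp f (2 * p) P)
    (hg : MemLp g (2 * p) P) : MemLp (fun ω => f ω * g ω) p P := by
  have : ENNReal.HolderTriple (2 * p) (2 * p) p := ⟨by
    rw [← two_mul, ENNReal.mul_inv (by simp) (by simp), ← mul_assoc,
      ENNReal.mul_inv_cancel (by simp) (by simp), one_mul]⟩
  exact hg.mul hf

lemma integral_sq_sum {ι : Type*} [Fintype ι] {Y : ι → Ω → ℝ} (hY : ∀ i, MemLp (Y i) 2 P) :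
    ∫ ω, (∑ i, Y i ω) ^ 2 ∂P = ∑ i, ∑ k, ∫ ω, Y i ω * Y k ω ∂P := by
  have hint (i k : ι) : Integrable (fun ω => Y i ω * Y k ω) P := (hY i).integrable_mul (hY k)
  simp_rw [sq, Finset.sum_mul_sum]
  rw [integral_finsetSum _ fun i _ => integrable_finsetSum _ fun k _ => hint i k]
  exact Finset.sum_congr rfl fun i _ => integral_finsetSum _ fun k _ => hint i k

lemma integral_sq_sum_le {ι : Type*} [Fintype ι] {Y : ι → Ω → ℝ} (hY : ∀ i, MemLp (Y i) 2 P) :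
    ∫ ω, (∑ i, Y i ω) ^ 2 ∂P ≤ Fintype.card ι * ∑ i, ∫ ω, Y i ω ^ 2 ∂P := by
  calc ∫ ω, (∑ i, Y i ω) ^ 2 ∂P ≤ ∫ ω, Fintype.card ι * ∑ i, Y i ω ^ 2 ∂P :=
        integral_mono (memLp_finsetSum _ fun i _ => hY i).integrable_sq
          ((integrable_finsetSum _ fun i _ => (hY i).integrable_sq).const_mul _)
          fun _ => sq_sum_le_card_mul_sum_sq
    _ = Fintype.card ι * ∑ i, ∫ ω, Y i ω ^ 2 ∂P := by
        rw [integral_const_mul, integral_finsetSum _ fun i _ => (hY i).integrable_sq]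

lemma lintegral_sq_mul_sum_le {ι : Type*} [Fintype ι] {Y : ι → Ω → ℝ}
    (hY : ∀ i, MemLp (Y i) 2 P) (c : ℝ) :
    ∫⁻ ω, ENNReal.ofReal ((c * ∑ i, Y i ω) ^ 2) ∂P ≤
      ENNReal.ofReal (c ^ 2 * (Fintype.card ι * ∑ i, ∫ ω, Y i ω ^ 2 ∂P)) := by
  rw [← ofReal_integral_eq_lintegral_ofReal
    ((memLp_finsetSum _ fun i _ => hY i).const_mul c).integrable_sq
    (ae_of_all _ fun _ => sq_nonneg _)]
  simp only [mul_pow, integral_const_mul]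
  gcongr
  exact integral_sq_sum_le hY

lemma integral_sq_comp_of_measurePreserving {Ω' : Type*} [MeasurableSpace Ω'] {Q : Measure Ω'}
    {φ : Ω → Ω'} {f : Ω' → ℝ} (hφ : MeasurePreserving φ P Q) (hf : MemLp f 2 Q) :
    ∫ ω, f (φ ω) ^ 2 ∂P = ∫ ω', f ω' ^ 2 ∂Q :=
  hφ.hasLaw.integral_comp (f := fun ω' => f ω' ^ 2) (hf.1.pow 2)

variable {ν : Measure ℝ} [IsProbabilityMeasure ν] {κ : Type*} [Fintype κ] {ι : Type*} {g : ι → κ}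
  {Y : ι → Ω → ℝ}

lemma integral_eval_mul_eval_pi_of_ne (hν : ∫ z, z ∂ν = 0) {p q : κ} (hpq : p ≠ q) :
    ∫ z, z p * z q ∂Measure.pi (fun _ : κ => ν) = 0 := by
  have hind := (iIndepFun_pi (μ := fun _ : κ => ν) (X := fun _ x => x)
    fun _ => aemeasurable_id).indepFun hpq
  rw [hind.integral_fun_mul_eq_mul_integral (measurable_pi_apply p).aestronglyMeasurable
      (measurable_pi_apply q).aestronglyMeasurable,
    integral_comp_eval (μ := fun _ => ν) (f := fun z => z) (by fun_prop), hν, zero_mul]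

lemma memLp_two_mul_eval_pi (hν : MemLp id 2 ν) (hY : ∀ i, MemLp (Y i) 2 P) (i : ι) :
    MemLp (fun w : Ω × (κ → ℝ) => Y i w.1 * w.2 (g i)) 2 (P.prod (Measure.pi fun _ => ν)) := by
  have hz : MemLp (fun z : κ → ℝ => z (g i)) 2 (Measure.pi fun _ => ν) :=
    hν.comp_measurePreserving (measurePreserving_eval _ (g i))
  have hsq := (hY i).integrable_sq.mul_prod hz.integrable_sq
  simp only [← mul_pow] at hsq
  exact (memLp_two_iff_integrable_sq ((hY i).1.comp_fst.mul hz.1.comp_snd)).2 hsq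

lemma integral_sq_sum_mul_eval_pi [SFinite P] [Fintype ι] (hν : MemLp id 2 ν)
    (hν0 : ∫ z, z ∂ν = 0) (hg : g.Injective) (hY : ∀ i, MemLp (Y i) 2 P) :
    ∫ w, (∑ i, Y i w.1 * w.2 (g i)) ^ 2 ∂P.prod (Measure.pi fun _ : κ => ν) =
      (∫ z, z ^ 2 ∂ν) * ∑ i, ∫ ω, Y i ω ^ 2 ∂P := by
  have hcross (i k : ι) :
      ∫ w, Y i w.1 * w.2 (g i) * (Y k w.1 * w.2 (g k)) ∂P.prod (Measure.pi fun _ : κ => ν) =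
        (∫ ω, Y i ω * Y k ω ∂P) * ∫ z, z (g i) * z (g k) ∂Measure.pi fun _ : κ => ν := by
    simp only [mul_mul_mul_comm (Y i _)]
    exact integral_prod_mul (fun ω => Y i ω * Y k ω) fun z : κ → ℝ => z (g i) * z (g k)
  rw [integral_sq_sum fun i => memLp_two_mul_eval_pi hν hY i, Finset.mul_sum]
  refine Finset.sum_congr rfl fun i _ => ?_
  rw [Finset.sum_eq_single i (fun k _ hki => by
    rw [hcross, integral_eval_mul_eval_pi_of_ne hν0 (hg.ne hki.symm), mul_zero]) (by simp),
    hcross, mul_comm]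
  simp only [← sq]
  rw [integral_comp_eval (μ := fun _ => ν) (f := fun z => z ^ 2) (by fun_prop)]

end SecondMoments

section Autocovariance

/-- Position of the later factor `X_{i+j}` of the `i`-th product of observations `j` apart. -/
def leadIndex (n j : ℕ) (i : Fin (n - j)) : Fin n := ⟨i + j, by omega⟩

/-- Position of the earlier factor `X_i` of the `i`-th product of observations `j` apart. -/
def lagIndex (n j : ℕ) (i : Fin (n - j)) : Fin n := ⟨i, by omega⟩

variable {n j : ℕ} {σ : ℤ → ℝ}

lemma leadIndex_injective : (leadIndex n j).Injective := fun i k hik => by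
  simpa [leadIndex, Fin.ext_iff] using hik

lemma lagIndex_injective : (lagIndex n j).Injective := fun i k hik => by
  simpa [lagIndex, Fin.ext_iff] using hik

lemma toeplitz_self (i : Fin n) : toeplitz n σ i i = σ 0 := by simp [toeplitz]

lemma toeplitz_apply (hσ : ∀ k, σ (-k) = σ k) (i k : Fin n) : toeplitz n σ i k = σ (i - k) := by
  rcases abs_choice ((i : ℤ) - k) with h | h <;> simp only [toeplitz, h, hσ]

lemma toeplitz_leadIndex_lagIndex (i : Fin (n - j)) :
    toeplitz n σ (leadIndex n j i) (lagIndex n j i) = σ j := by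
  simp [toeplitz, leadIndex, lagIndex]

lemma sum_comp_le_tsum {ι κ : Type*} [Fintype ι] {f : κ → ℝ} (hf0 : 0 ≤ f) (hf : Summable f)
    {e : ι → κ} (he : e.Injective) : ∑ i, f (e i) ≤ ∑' k, f k := by
  rw [← tsum_fintype (L := .unconditional _)]
  exact (hf.comp_injective he).tsum_le_tsum_of_inj e he (fun k _ => hf0 k) (fun _ => le_rfl) hf

namespace IsCenteredGaussian

variable {μ : Measure (Fin n → ℝ)}

lemma memLp_two_eval_mul_eval {S : Matrix (Fin n) (Fin n) ℝ} (h : IsCenteredGaussian μ S)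
    (p q : Fin n) : MemLp (fun x => x p * x q) 2 μ :=
  memLp_mul_of_memLp_two_mul (h.memLp_eval p (by finiteness)) (h.memLp_eval q (by finiteness))

lemma covariance_eval_mul_eval {S : Matrix (Fin n) (Fin n) ℝ} (h : IsCenteredGaussian μ S)
    (hS : S.PosSemidef) (p q r s : Fin n) :
    cov[fun x => x p * x q, fun x => x r * x s; μ] = S p r * S q s + S p s * S q r := by
  have := h.isProbabilityMeasure
  rw [covariance_eq_sub (h.memLp_two_eval_mul_eval p q) (h.memLp_two_eval_mul_eval r s),
    h.integral_eval_mul_eval hS, h.integral_eval_mul_eval hS]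
  simp only [Pi.mul_apply, h.integral_eval_mul_four hS]
  ring

lemma variance_sum_lag_products_le (h : IsCenteredGaussian μ (toeplitz n σ))
    (hS : (toeplitz n σ).PosSemidef) (hσ : ∀ k, σ (-k) = σ k)
    (hsum : Summable fun k => σ k ^ 2) :
    Var[fun x => ∑ i, x (leadIndex n j i) * x (lagIndex n j i); μ] ≤
      (n - j : ℕ) * (2 * ∑' k, σ k ^ 2) := by
  have := h.isProbabilityMeasure
  have hshift (c : ℤ) (i : Fin (n - j)) :
      ∑ k : Fin (n - j), σ (i - k + c) ^ 2 ≤ ∑' k, σ k ^ 2 :=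
    sum_comp_le_tsum (f := fun k => σ k ^ 2) (fun _ => sq_nonneg _) hsum fun k l hkl => by
      simpa [Fin.ext_iff] using hkl
  rw [variance_fun_sum fun i => h.memLp_two_eval_mul_eval _ _]
  calc ∑ i : Fin (n - j), ∑ k : Fin (n - j),
        cov[fun x => x (leadIndex n j i) * x (lagIndex n j i),
          fun x => x (leadIndex n j k) * x (lagIndex n j k); μ]
      = ∑ i : Fin (n - j), ∑ k : Fin (n - j),
          (σ (i - k + 0) ^ 2 + σ (i - k + j) * σ (i - k + -j)) := by
        refine Finset.sum_congr rfl fun i _ => Finset.sum_congr rfl fun k _ => ?_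
        simp only [h.covariance_eval_mul_eval hS, toeplitz_apply hσ, leadIndex, lagIndex, sq]
        push_cast
        ring_nf
    _ ≤ ∑ i : Fin (n - j), ∑ k : Fin (n - j), (σ (i - k + 0) ^ 2 +
          (σ (i - k + j) ^ 2 + σ (i - k + -j) ^ 2) / 2) := by
        gcongr with i _ k _
        linarith [two_mul_le_add_sq (σ (i - k + j)) (σ (i - k + -j))]
    _ ≤ ∑ _i : Fin (n - j), 2 * ∑' k, σ k ^ 2 := by
        gcongr with i
        rw [Finset.sum_add_distrib, ← Finset.sum_div, Finset.sum_add_distrib]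
        linarith [hshift 0 i, hshift j i, hshift (-j) i]
    _ = _ := by simp

end IsCenteredGaussian

end Autocovariance

section TrimmingError

lemma trim_eq_self {c x : ℝ} (hx : |x| ≤ c) : trim c x = x := by
  rw [trim, min_eq_left (abs_le.1 hx).2, max_eq_right (abs_le.1 hx).1]

lemma abs_trim_le_abs {c : ℝ} (hc : 0 ≤ c) (x : ℝ) : |trim c x| ≤ |x| := by
  rw [trim, abs_le]
  exact ⟨le_max_of_le_right (le_min (neg_abs_le x) (by linarith [abs_nonneg x])),
    max_le (by linarith [abs_nonneg x]) (min_le_of_left_le (le_abs_self x))⟩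

@[fun_prop]
lemma measurable_trim (c : ℝ) : Measurable (trim c) := by
  unfold trim
  fun_prop

/-- The error made by trimming, first `x` at level `τ` and then the product at level `τ'`, when
the product `y (x + z)` is released with noise `z` added to `x`. -/
noncomputable def trimError (τ τ' x y z : ℝ) : ℝ := trim τ' (y * (trim τ x + z)) - y * (x + z)

variable {τ τ' : ℝ}

lemma trimError_eq_zero {t x y z : ℝ} (hτ' : τ * (τ + t) ≤ τ') (hx : |x| ≤ τ) (hy : |y| ≤ τ)
    (hz : |z| ≤ t) : trimError τ τ' x y z = 0 := by
  have hprod : |y * (x + z)| ≤ τ' := by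
    rw [abs_mul]
    refine le_trans ?_ hτ'
    gcongr
    · exact (abs_nonneg x).trans hx
    · exact (abs_add_le x z).trans (add_le_add hx hz)
  rw [trimError, trim_eq_self hx, trim_eq_self hprod, sub_self]

lemma abs_trimError_le (hτ : 0 ≤ τ) (hτ' : 0 ≤ τ') (x y z : ℝ) :
    |trimError τ τ' x y z| ≤ 2 * (|y| * (|x| + |z|)) := by
  have htrim : |trim τ' (y * (trim τ x + z))| ≤ |y| * (|x| + |z|) := by
    refine (abs_trim_le_abs hτ' _).trans ?_
    rw [abs_mul]
    gcongr
    exact (abs_add_le _ z).trans (add_le_add_left (abs_trim_le_abs hτ x) _)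
  have huntrimmed : |y * (x + z)| ≤ |y| * (|x| + |z|) := by
    rw [abs_mul]
    gcongr
    exact abs_add_le x z
  calc |trimError τ τ' x y z| ≤ |trim τ' (y * (trim τ x + z))| + |y * (x + z)| := abs_sub _ _
    _ ≤ 2 * (|y| * (|x| + |z|)) := by linarith

lemma trimError_pow_four_le (hτ : 0 ≤ τ) (hτ' : 0 ≤ τ') (x y z : ℝ) :
    trimError τ τ' x y z ^ 4 ≤ 64 * (2 * y ^ 8 + x ^ 8 + z ^ 8) := by
  calc trimError τ τ' x y z ^ 4 = |trimError τ τ' x y z| ^ 4 := by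
        rw [(by decide : Even 4).pow_abs]
    _ ≤ (2 * (|y| * (|x| + |z|))) ^ 4 := by
        gcongr
        exact abs_trimError_le hτ hτ' x y z
    _ = 16 * (|y| ^ 4 * (|x| + |z|) ^ 4) := by ring
    _ ≤ 16 * (|y| ^ 4 * (8 * (|x| ^ 4 + |z| ^ 4))) := by
        gcongr
        exact (add_pow_le (abs_nonneg x) (abs_nonneg z) 4).trans_eq (by norm_num)
    _ ≤ 64 * (2 * y ^ 8 + x ^ 8 + z ^ 8) := by
        simp only [(by decide : Even 4).pow_abs]
        nlinarith [sq_nonneg (y ^ 4 - x ^ 4), sq_nonneg (y ^ 4 - z ^ 4)]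

section Lp

variable {Ω : Type*} [MeasurableSpace Ω] {P : Measure Ω} {X Y ξ : Ω → ℝ}

lemma measurable_trimError (hX : Measurable X) (hY : Measurable Y) (hξ : Measurable ξ) :
    Measurable fun ω => trimError τ τ' (X ω) (Y ω) (ξ ω) := by
  unfold trimError
  fun_prop

lemma memLp_trimError (hXm : Measurable X) (hYm : Measurable Y) (hξm : Measurable ξ)
    {p : ENNReal} (hX : MemLp X (2 * p) P) (hY : MemLp Y (2 * p) P) (hξ : MemLp ξ (2 * p) P)
    (hτ : 0 ≤ τ) (hτ' : 0 ≤ τ') : MemLp (fun ω => trimError τ τ' (X ω) (Y ω) (ξ ω)) p P :=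
  ((memLp_mul_of_memLp_two_mul hY.abs (hX.abs.add hξ.abs)).const_mul 2).of_le
    (measurable_trimError hXm hYm hξm).aestronglyMeasurable
    (ae_of_all _ fun _ => (abs_trimError_le hτ hτ' _ _ _).trans (le_abs_self _))

lemma integral_trimError_pow_four_le (hX : Integrable (fun ω => X ω ^ 8) P)
    (hY : Integrable (fun ω => Y ω ^ 8) P) (hξ : Integrable (fun ω => ξ ω ^ 8) P)
    (hτ : 0 ≤ τ) (hτ' : 0 ≤ τ') :
    ∫ ω, trimError τ τ' (X ω) (Y ω) (ξ ω) ^ 4 ∂P ≤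
      64 * (2 * ∫ ω, Y ω ^ 8 ∂P + ∫ ω, X ω ^ 8 ∂P + ∫ ω, ξ ω ^ 8 ∂P) := by
  have hYX : Integrable (fun ω => 2 * Y ω ^ 8 + X ω ^ 8) P := (hY.const_mul 2).add hX
  calc ∫ ω, trimError τ τ' (X ω) (Y ω) (ξ ω) ^ 4 ∂P
      ≤ ∫ ω, 64 * (2 * Y ω ^ 8 + X ω ^ 8 + ξ ω ^ 8) ∂P :=
        integral_mono_of_nonneg (ae_of_all _ fun _ => by positivity) ((hYX.add hξ).const_mul 64)
          (ae_of_all _ fun ω => trimError_pow_four_le hτ hτ' _ _ _)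
    _ = _ := by
        rw [integral_const_mul, integral_add hYX hξ, integral_add (hY.const_mul 2) hX,
          integral_const_mul]

end Lp

end TrimmingError

section Tails

variable {Ω : Type*} [MeasurableSpace Ω] {P : Measure Ω} {X Y ξ : Ω → ℝ} {s : NNReal}

lemma measureReal_lt_abs_le_of_hasSubgaussianMGF [IsFiniteMeasure P]
    (hX : HasSubgaussianMGF X s P) {ε : ℝ} (hε : 0 ≤ ε) :
    P.real {ω | ε < |X ω|} ≤ 2 * rexp (-ε ^ 2 / (2 * s)) := by
  have hcover : {ω | ε < |X ω|} ⊆ {ω | ε ≤ X ω} ∪ {ω | ε ≤ (-X) ω} := fun ω hω => by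
    simpa [le_abs] using le_of_lt (Set.mem_ofPred.1 hω)
  calc P.real {ω | ε < |X ω|} ≤ P.real {ω | ε ≤ X ω} + P.real {ω | ε ≤ (-X) ω} :=
        (measureReal_mono hcover).trans (measureReal_union_le _ _)
    _ ≤ 2 * rexp (-ε ^ 2 / (2 * s)) := by
        linarith [hX.measure_ge_le hε, hX.neg.measure_ge_le hε]

lemma integral_abs_pow_le_of_hasSubgaussianMGF (hX : HasSubgaussianMGF X s P) (k : ℕ) :
    ∫ ω, |X ω| ^ k ∂P ≤ 2 * k.factorial * rexp (s / 2) := by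
  have hexp := hX.integrable_exp_mul 1
  have hexp' := hX.integrable_exp_mul (-1)
  have hmgf := hX.mgf_le 1
  have hmgf' := hX.mgf_le (-1)
  simp only [one_mul, neg_one_mul, mgf, one_pow, mul_one, even_two.neg_pow] at hexp hexp' hmgf hmgf'
  calc ∫ ω, |X ω| ^ k ∂P ≤ ∫ ω, k.factorial * (rexp (X ω) + rexp (-X ω)) ∂P := by
        refine integral_mono_of_nonneg (ae_of_all _ fun ω => by positivity)
          ((hexp.add hexp').const_mul _) (ae_of_all _ fun ω => ?_)
        rw [← div_le_iff₀' (by positivity)]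
        exact (pow_div_factorial_le_exp _ (abs_nonneg _) k).trans (exp_abs_le _)
    _ ≤ 2 * k.factorial * rexp (s / 2) := by
        rw [integral_const_mul, integral_add hexp hexp', mul_comm 2, mul_assoc]
        gcongr
        linarith

lemma sq_integral_sq_le_integral_pow_four_mul_support [IsFiniteMeasure P] {f : Ω → ℝ}
    (hfm : Measurable f) (hf : Integrable (fun ω => f ω ^ 4) P) :
    (∫ ω, f ω ^ 2 ∂P) ^ 2 ≤ (∫ ω, f ω ^ 4 ∂P) * P.real f.support := by
  have hfourth (ω : Ω) : (f ω ^ 2) ^ (2 : ℝ) = f ω ^ 4 := by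
    rw [rpow_two, ← pow_mul]
  have hf2 : MemLp (fun ω => f ω ^ 2) (ENNReal.ofReal 2) P := by
    rw [ENNReal.ofReal_ofNat, memLp_two_iff_integrable_sq (by fun_prop)]
    simpa only [← pow_mul] using hf
  have hind (ω : Ω) : f ω ^ 2 * f.support.indicator 1 ω = f ω ^ 2 := by
    by_cases hω : f ω = 0 <;> simp [hω]
  have hind2 (ω : Ω) :
      f.support.indicator (1 : Ω → ℝ) ω ^ (2 : ℝ) = f.support.indicator 1 ω := by
    by_cases hω : f ω = 0 <;> simp [hω]
  have hholder : ∫ ω, f ω ^ 2 * f.support.indicator 1 ω ∂P ≤ _ :=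
    integral_mul_le_Lp_mul_Lq_of_nonneg .two_two (ae_of_all P fun ω => sq_nonneg (f ω))
      (ae_of_all P (Set.indicator_nonneg fun _ _ => zero_le_one)) hf2
      (memLp_indicator_const (ENNReal.ofReal 2) (measurableSet_support hfm) (1 : ℝ)
        (.inr (measure_ne_top P _)))
  simp only [hind, hind2, hfourth, integral_indicator_one (measurableSet_support hfm),
    ← sqrt_eq_rpow] at hholder
  calc (∫ ω, f ω ^ 2 ∂P) ^ 2 ≤ (√(∫ ω, f ω ^ 4 ∂P) * √(P.real f.support)) ^ 2 := by
        gcongr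
    _ = (∫ ω, f ω ^ 4 ∂P) * P.real f.support := by
        rw [mul_pow, sq_sqrt (integral_nonneg fun ω => by positivity), sq_sqrt measureReal_nonneg]

variable {b τ τ' t N : ℝ}

lemma measureReal_support_trimError_le [IsFiniteMeasure P] (hX : HasSubgaussianMGF X s P)
    (hY : HasSubgaussianMGF Y s P) (hb : 0 < b) (hξ : HasLaw ξ (laplace 0 b) P) (hτ : 0 ≤ τ)
    (ht : 0 ≤ t) (hτ' : τ * (τ + t) ≤ τ') :
    P.real (Function.support fun ω => trimError τ τ' (X ω) (Y ω) (ξ ω)) ≤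
      4 * rexp (-τ ^ 2 / (2 * s)) + rexp (-t / b) := by
  have hcover : (Function.support fun ω => trimError τ τ' (X ω) (Y ω) (ξ ω)) ⊆
      ({ω | τ < |X ω|} ∪ {ω | τ < |Y ω|}) ∪ {ω | t < |ξ ω|} := fun ω hω => by
    by_contra! h
    simp only [Set.mem_union, Set.mem_ofPred_eq, not_or, not_lt] at h
    exact hω (trimError_eq_zero hτ' h.1.1 h.1.2 h.2)
  have hξtail : P.real {ω | t < |ξ ω|} = rexp (-t / b) := by
    rw [← measureReal_lt_abs_laplace hb ht]
    exact hξ.measureReal_eq (p := fun z => t < |z|) (measurableSet_lt (by fun_prop) (by fun_prop))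
  calc P.real (Function.support fun ω => trimError τ τ' (X ω) (Y ω) (ξ ω))
      ≤ P.real {ω | τ < |X ω|} + P.real {ω | τ < |Y ω|} + P.real {ω | t < |ξ ω|} :=
        (measureReal_mono hcover).trans <| (measureReal_union_le _ _).trans <|
          add_le_add_left (measureReal_union_le _ _) _
    _ ≤ 4 * rexp (-τ ^ 2 / (2 * s)) + rexp (-t / b) := by
        rw [hξtail]
        linarith [measureReal_lt_abs_le_of_hasSubgaussianMGF hX hτ,
          measureReal_lt_abs_le_of_hasSubgaussianMGF hY hτ]

lemma memLp_of_hasLaw_laplace (hb : 0 < b) (hξ : HasLaw ξ (laplace 0 b) P) {k : ℕ} (hk : k ≠ 0) :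
    MemLp ξ k P := by
  have h := memLp_id_laplace hb hk
  rw [← hξ.map_eq] at h
  exact h.comp_of_map hξ.aemeasurable

lemma integral_trimError_pow_four_le_of_hasSubgaussianMGF (hX : HasSubgaussianMGF X s P)
    (hY : HasSubgaussianMGF Y s P) (hb : 0 < b) (hξ : HasLaw ξ (laplace 0 b) P) (hτ : 0 ≤ τ)
    (hτ' : 0 ≤ τ') :
    ∫ ω, trimError τ τ' (X ω) (Y ω) (ξ ω) ^ 4 ∂P ≤
      64 * (Nat.factorial 8 * (6 * rexp (s / 2) + b ^ 8)) := by
  have hX8 := (hX.memLp 8).integrable_norm_pow (by decide)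
  have hY8 := (hY.memLp 8).integrable_norm_pow (by decide)
  have hξ8 := (memLp_of_hasLaw_laplace hb hξ (k := 8) (by decide)).integrable_norm_pow (by decide)
  have hXle := integral_abs_pow_le_of_hasSubgaussianMGF hX 8
  have hYle := integral_abs_pow_le_of_hasSubgaussianMGF hY 8
  have hξeq : ∫ ω, |ξ ω| ^ 8 ∂P = Nat.factorial 8 * b ^ 8 := by
    rw [← integral_abs_pow_laplace hb]
    exact hξ.integral_comp (f := fun z => |z| ^ 8) (by fun_prop)
  simp only [norm_eq_abs, (by decide : Even 8).pow_abs] at hX8 hY8 hξ8 hXle hYle hξeq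
  calc ∫ ω, trimError τ τ' (X ω) (Y ω) (ξ ω) ^ 4 ∂P
      ≤ 64 * (2 * ∫ ω, Y ω ^ 8 ∂P + ∫ ω, X ω ^ 8 ∂P + ∫ ω, ξ ω ^ 8 ∂P) :=
        integral_trimError_pow_four_le hX8 hY8 hξ8 hτ hτ'
    _ ≤ 64 * (2 * (2 * Nat.factorial 8 * rexp (s / 2)) + 2 * Nat.factorial 8 * rexp (s / 2) +
          Nat.factorial 8 * b ^ 8) := by
        rw [hξeq]
        gcongr
    _ = 64 * (Nat.factorial 8 * (6 * rexp (s / 2) + b ^ 8)) := by ring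

lemma integral_trimError_sq_le [IsFiniteMeasure P] (hXm : Measurable X) (hYm : Measurable Y)
    (hξm : Measurable ξ) (hX : HasSubgaussianMGF X s P) (hY : HasSubgaussianMGF Y s P)
    (hb : 0 < b) (hξ : HasLaw ξ (laplace 0 b) P) (hτ : 0 ≤ τ) (ht : 0 ≤ t)
    (hτ' : τ * (τ + t) ≤ τ') (hN : 5 ≤ N) (hτN : rexp (-τ ^ 2 / (2 * s)) ≤ 1 / N ^ 4)
    (htN : rexp (-t / b) ≤ 1 / N ^ 4)
    (hNmoment : 64 * (Nat.factorial 8 * (6 * rexp (s / 2) + b ^ 8)) ≤ N) :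
    ∫ ω, trimError τ τ' (X ω) (Y ω) (ξ ω) ^ 2 ∂P ≤ 1 / N := by
  have hτ'_nonneg : 0 ≤ τ' := le_trans (by positivity) hτ'
  have hfourth := (integral_trimError_pow_four_le_of_hasSubgaussianMGF hX hY hb hξ hτ hτ'_nonneg).trans
    hNmoment
  have hmemLp : MemLp (fun ω => trimError τ τ' (X ω) (Y ω) (ξ ω)) 4 P := by
    refine memLp_trimError hXm hYm hξm ?_ ?_ ?_ hτ hτ'_nonneg
    · exact_mod_cast hX.memLp (2 * 4)
    · exact_mod_cast hY.memLp (2 * 4)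
    · exact_mod_cast memLp_of_hasLaw_laplace hb hξ (k := 2 * 4) (by decide)
  have hint := hmemLp.integrable_norm_pow (p := 4) (by decide)
  simp only [norm_eq_abs, (by decide : Even 4).pow_abs] at hint
  have hsupport : P.real (Function.support fun ω => trimError τ τ' (X ω) (Y ω) (ξ ω)) ≤
      5 / N ^ 4 := by
    refine (measureReal_support_trimError_le hX hY hb hξ hτ ht hτ').trans ?_
    linarith [show 5 / N ^ 4 = 5 * (1 / N ^ 4) by ring]
  refine le_of_sq_le_sq ?_ (by positivity)
  calc (∫ ω, trimError τ τ' (X ω) (Y ω) (ξ ω) ^ 2 ∂P) ^ 2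
      ≤ (∫ ω, trimError τ τ' (X ω) (Y ω) (ξ ω) ^ 4 ∂P) *
          P.real (Function.support fun ω => trimError τ τ' (X ω) (Y ω) (ξ ω)) :=
        sq_integral_sq_le_integral_pow_four_mul_support (measurable_trimError hXm hYm hξm) hint
    _ ≤ N * (5 / N ^ 4) := by gcongr
    _ = (5 / N) * (1 / N) ^ 2 := by
        field_simp
    _ ≤ (1 / N) ^ 2 :=
        mul_le_of_le_one_left (by positivity) ((div_le_one₀ (by linarith)).2 hN)

end Tails

section MeanSquaredError

lemma hasSubgaussianMGF_of_hasLaw_gaussianReal {Ω : Type*} [MeasurableSpace Ω] {P : Measure Ω}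
    {X : Ω → ℝ} {v s : NNReal} (hX : HasLaw X (gaussianReal 0 v) P) (hvs : v ≤ s) :
    HasSubgaussianMGF X s P := by
  rw [← HasSubgaussianMGF.id_map_iff hX.aemeasurable, hX.map_eq]
  refine ⟨integrable_exp_mul_gaussianReal, fun t => ?_⟩
  rw [mgf_gaussianReal Measure.map_id, zero_mul, zero_add]
  gcongr

/-- Joint law of `(X, ξ, ξ̃)`, where the sample `X` has law `μ` and the independent noise
variables `ξᵢ` and `ξ̃ᵢ` have Laplace laws of scales `b` and `b'`. -/
noncomputable def privatizedLaw {n : ℕ} (μ : Measure (Fin n → ℝ)) (b b' : ℝ) :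
    Measure ((Fin n → ℝ) × (Fin n → ℝ) × (Fin n → ℝ)) :=
  μ.prod ((Measure.pi fun _ => laplace 0 b).prod (Measure.pi fun _ => laplace 0 b'))

variable {n j : ℕ} {σ : ℤ → ℝ} {μ : Measure (Fin n → ℝ)} {b b' τ τ' : ℝ}

/-- Sum over the lagged pairs of the errors `XᵢXᵢ₋ⱼ - a`, where `a` estimates their mean. -/
noncomputable def samplingError (n j : ℕ) (a : ℝ) (x : Fin n → ℝ) : ℝ :=
  ∑ i, x (leadIndex n j i) * x (lagIndex n j i) - (n - j : ℕ) * a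

/-- Sum over the lagged pairs of the errors `Xᵢξᵢ₋ⱼ` due to the noise `ξ` added to the sample. -/
noncomputable def inputNoiseError (n j : ℕ) (x ξ : Fin n → ℝ) : ℝ :=
  ∑ i, x (leadIndex n j i) * ξ (lagIndex n j i)

/-- Sum over the lagged pairs of the noise `ξ̃ᵢ` added to the products. -/
noncomputable def outputNoiseError (n j : ℕ) (ξ' : Fin n → ℝ) : ℝ :=
  ∑ i, ξ' (leadIndex n j i)

/-- Sum over the lagged pairs of the trimming errors. -/
noncomputable def totalTrimError (n j : ℕ) (τ τ' : ℝ) (x ξ : Fin n → ℝ) : ℝ :=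
  ∑ i, trimError τ τ' (x (lagIndex n j i)) (x (leadIndex n j i)) (ξ (lagIndex n j i))

/-- The four centered or small terms into which `(n - j) (σ̂ⱼ - a)` splits. -/
noncomputable def errorTerm (n j : ℕ) (a τ τ' : ℝ) :
    Fin 4 → (Fin n → ℝ) × (Fin n → ℝ) × (Fin n → ℝ) → ℝ :=
  ![fun w => samplingError n j a w.1, fun w => inputNoiseError n j w.1 w.2.1,
    fun w => outputNoiseError n j w.2.2, fun w => totalTrimError n j τ τ' w.1 w.2.1]

lemma sigmaHat_sub_eq (hj : j < n) (w : (Fin n → ℝ) × (Fin n → ℝ) × (Fin n → ℝ)) (a : ℝ) :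
    sigmaHat n j τ τ' w - a = ((n : ℝ) - j)⁻¹ * ∑ k, errorTerm n j a τ τ' k w := by
  have hnj : (n : ℝ) - j ≠ 0 := sub_ne_zero.2 (Nat.cast_injective.ne hj.ne')
  have hsum : sigmaHat n j τ τ' w = ((n : ℝ) - j)⁻¹ *
      ∑ i, (w.1 (leadIndex n j i) * w.1 (lagIndex n j i) +
        w.1 (leadIndex n j i) * w.2.1 (lagIndex n j i) + w.2.2 (leadIndex n j i) +
        trimError τ τ' (w.1 (lagIndex n j i)) (w.1 (leadIndex n j i))
          (w.2.1 (lagIndex n j i))) := by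
    refine congrArg _ (Finset.sum_congr rfl fun i _ => ?_)
    simp only [trimError, leadIndex, lagIndex]
    ring
  have hterms : ∑ k, errorTerm n j a τ τ' k w = samplingError n j a w.1 +
      inputNoiseError n j w.1 w.2.1 + outputNoiseError n j w.2.2 +
      totalTrimError n j τ τ' w.1 w.2.1 := Fin.sum_univ_four _
  rw [hsum, hterms, samplingError, inputNoiseError, outputNoiseError, totalTrimError,
    Nat.cast_sub hj.le]
  simp only [Finset.sum_add_distrib]
  field_simp
  ring

lemma measurePreserving_sample (hb : 0 < b) (hb' : 0 < b') :
    MeasurePreserving Prod.fst (privatizedLaw μ b b') μ := by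
  have := isProbabilityMeasure_laplace hb
  have := isProbabilityMeasure_laplace hb'
  exact measurePreserving_fst

lemma measurePreserving_sample_noise [SFinite μ] (hb : 0 < b) (hb' : 0 < b') :
    MeasurePreserving (Prod.map id Prod.fst) (privatizedLaw μ b b')
      (μ.prod (Measure.pi fun _ => laplace 0 b)) := by
  have := isProbabilityMeasure_laplace hb
  have := isProbabilityMeasure_laplace hb'
  exact (MeasurePreserving.id μ).prod measurePreserving_fst

lemma measurePreserving_output_noise [IsProbabilityMeasure μ] (hb : 0 < b) (hb' : 0 < b') :
    MeasurePreserving (fun w => w.2.2) (privatizedLaw μ b b')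
      (Measure.pi fun _ => laplace 0 b') := by
  have := isProbabilityMeasure_laplace hb
  have := isProbabilityMeasure_laplace hb'
  exact measurePreserving_snd.comp measurePreserving_snd

lemma integral_sq_laplace (hb : 0 < b) : ∫ z, z ^ 2 ∂laplace 0 b = 2 * b ^ 2 := by
  simpa using integral_abs_pow_laplace hb 2

namespace IsCenteredGaussian

lemma memLp_samplingError {S : Matrix (Fin n) (Fin n) ℝ} (h : IsCenteredGaussian μ S) (a : ℝ) :
    MemLp (samplingError n j a) 2 μ := by
  have := h.isProbabilityMeasure
  exact (memLp_finsetSum _ fun i _ => h.memLp_two_eval_mul_eval _ _).sub (memLp_const _)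

lemma integral_samplingError_sq_le (h : IsCenteredGaussian μ (toeplitz n σ))
    (hS : (toeplitz n σ).PosSemidef) (hσ : ∀ k, σ (-k) = σ k)
    (hsum : Summable fun k => σ k ^ 2) :
    ∫ x, samplingError n j (σ j) x ^ 2 ∂μ ≤ (n - j : ℕ) * (2 * ∑' k, σ k ^ 2) := by
  have := h.isProbabilityMeasure
  have hL2 (i : Fin (n - j)) := h.memLp_two_eval_mul_eval (leadIndex n j i) (lagIndex n j i)
  have hmean : ∫ x, ∑ i, x (leadIndex n j i) * x (lagIndex n j i) ∂μ = (n - j : ℕ) * σ j := by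
    rw [integral_finsetSum _ fun i _ => (hL2 i).integrable one_le_two]
    simp [h.integral_eval_mul_eval hS, toeplitz_leadIndex_lagIndex]
  unfold samplingError
  rw [← hmean, ← variance_eq_integral (memLp_finsetSum _ fun i _ => hL2 i).aemeasurable]
  exact h.variance_sum_lag_products_le hS hσ hsum

lemma memLp_inputNoiseError {S : Matrix (Fin n) (Fin n) ℝ} (h : IsCenteredGaussian μ S)
    (hb : 0 < b) :
    MemLp (fun w => inputNoiseError n j w.1 w.2) 2 (μ.prod (Measure.pi fun _ => laplace 0 b)) := by
  have := h.isProbabilityMeasure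
  have := isProbabilityMeasure_laplace hb
  exact memLp_finsetSum _ fun i _ => memLp_two_mul_eval_pi (memLp_id_laplace hb two_ne_zero)
    (fun i => h.memLp_eval (leadIndex n j i) (by finiteness)) i

lemma integral_inputNoiseError_sq (h : IsCenteredGaussian μ (toeplitz n σ))
    (hS : (toeplitz n σ).PosSemidef) (hb : 0 < b) :
    ∫ w, inputNoiseError n j w.1 w.2 ^ 2 ∂μ.prod (Measure.pi fun _ => laplace 0 b) =
      (n - j : ℕ) * (2 * b ^ 2 * σ 0) := by
  have := h.isProbabilityMeasure
  have := isProbabilityMeasure_laplace hb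
  have hsq (p : Fin n) : ∫ x, x p ^ 2 ∂μ = σ 0 := by
    simpa only [sq, toeplitz_self] using h.integral_eval_mul_eval hS p p
  refine (integral_sq_sum_mul_eval_pi (Y := fun i (x : Fin n → ℝ) => x (leadIndex n j i))
    (memLp_id_laplace hb two_ne_zero) (integral_id_laplace b) lagIndex_injective
    fun i => h.memLp_eval _ (by finiteness)).trans ?_
  simp only [hsq, integral_sq_laplace hb, Finset.sum_const, Finset.card_univ, Fintype.card_fin,
    nsmul_eq_mul]
  ring

end IsCenteredGaussian

lemma memLp_outputNoiseError (hb : 0 < b) :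
    MemLp (outputNoiseError n j) 2 (Measure.pi fun _ => laplace 0 b) := by
  have := isProbabilityMeasure_laplace hb
  exact memLp_finsetSum _ fun i _ => (memLp_id_laplace hb two_ne_zero).comp_measurePreserving
    (measurePreserving_eval (fun _ => laplace 0 b) (leadIndex n j i))

lemma integral_outputNoiseError_sq (hb : 0 < b) :
    ∫ z, outputNoiseError n j z ^ 2 ∂Measure.pi (fun _ => laplace 0 b) =
      (n - j : ℕ) * (2 * b ^ 2) := by
  have := isProbabilityMeasure_laplace hb
  have hsum := integral_sq_sum_mul_eval_pi (P := Measure.dirac ()) (Y := fun _ _ => 1)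
    (memLp_id_laplace hb two_ne_zero) (integral_id_laplace b)
    (leadIndex_injective (n := n) (j := j)) fun _ => memLp_const 1
  simp only [one_mul] at hsum
  rw [integral_fun_snd fun z : Fin n → ℝ => (∑ i, z (leadIndex n j i)) ^ 2] at hsum
  simpa [outputNoiseError, integral_sq_laplace hb, mul_comm] using hsum

lemma hasLaw_noise_eval [IsProbabilityMeasure μ] (hb : 0 < b) (p : Fin n) :
    HasLaw (fun w => w.2 p) (laplace 0 b) (μ.prod (Measure.pi fun _ => laplace 0 b)) := by
  have := isProbabilityMeasure_laplace hb
  exact ((measurePreserving_eval (fun _ => laplace 0 b) p).comp measurePreserving_snd).hasLaw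

namespace IsCenteredGaussian

variable {S : Matrix (Fin n) (Fin n) ℝ}

lemma memLp_trimError_eval (h : IsCenteredGaussian μ S) (hb : 0 < b) (hτ : 0 ≤ τ) (hτ' : 0 ≤ τ')
    (p q : Fin n) :
    MemLp (fun w : (Fin n → ℝ) × (Fin n → ℝ) => trimError τ τ' (w.1 p) (w.1 q) (w.2 p)) 2
      (μ.prod (Measure.pi fun _ => laplace 0 b)) := by
  have := h.isProbabilityMeasure
  have := isProbabilityMeasure_laplace hb
  have hX (r : Fin n) := (h.memLp_eval r (r := 2 * 2) (by finiteness)).comp_measurePreserving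
    (measurePreserving_fst (ν := Measure.pi fun _ : Fin n => laplace 0 b))
  refine memLp_trimError (by fun_prop) (by fun_prop) (by fun_prop) (hX p) (hX q) ?_ hτ hτ'
  exact_mod_cast memLp_of_hasLaw_laplace hb (hasLaw_noise_eval hb p) (k := 2 * 2) (by decide)

lemma hasSubgaussianMGF_eval_fst (h : IsCenteredGaussian μ S) (hb : 0 < b) {s : NNReal}
    {p : Fin n} (hs : S p p ≤ s) :
    HasSubgaussianMGF (fun w => w.1 p) s (μ.prod (Measure.pi fun _ : Fin n => laplace 0 b)) := by
  have := isProbabilityMeasure_laplace hb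
  exact hasSubgaussianMGF_of_hasLaw_gaussianReal
    ((h.hasLaw_eval p).comp measurePreserving_fst.hasLaw) (toNNReal_le_iff_le_coe.2 hs)

lemma integral_trimError_eval_sq_le (h : IsCenteredGaussian μ S) {s : NNReal}
    (hs : ∀ p, S p p ≤ s) (hb : 0 < b) (hτ : 0 ≤ τ) {t N : ℝ} (ht : 0 ≤ t)
    (hτ' : τ * (τ + t) ≤ τ') (hN : 5 ≤ N) (hτN : rexp (-τ ^ 2 / (2 * s)) ≤ 1 / N ^ 4)
    (htN : rexp (-t / b) ≤ 1 / N ^ 4)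
    (hNmoment : 64 * (Nat.factorial 8 * (6 * rexp (s / 2) + b ^ 8)) ≤ N) (p q : Fin n) :
    ∫ w, trimError τ τ' (w.1 p) (w.1 q) (w.2 p) ^ 2 ∂μ.prod (Measure.pi fun _ => laplace 0 b) ≤
      1 / N := by
  have := h.isProbabilityMeasure
  have := isProbabilityMeasure_laplace hb
  exact integral_trimError_sq_le (by fun_prop) (by fun_prop) (by fun_prop)
    (h.hasSubgaussianMGF_eval_fst hb (hs p)) (h.hasSubgaussianMGF_eval_fst hb (hs q)) hb
    (hasLaw_noise_eval hb p) hτ ht hτ' hN hτN htN hNmoment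

lemma memLp_totalTrimError (h : IsCenteredGaussian μ S) (hb : 0 < b) (hτ : 0 ≤ τ) (hτ' : 0 ≤ τ') :
    MemLp (fun w => totalTrimError n j τ τ' w.1 w.2) 2
      (μ.prod (Measure.pi fun _ => laplace 0 b)) :=
  memLp_finsetSum _ fun _ _ => h.memLp_trimError_eval hb hτ hτ' _ _

lemma integral_totalTrimError_sq_le (h : IsCenteredGaussian μ S) (hb : 0 < b) (hτ : 0 ≤ τ)
    (hτ' : 0 ≤ τ') {d : ℝ}
    (hd : ∀ p q : Fin n, ∫ w, trimError τ τ' (w.1 p) (w.1 q) (w.2 p) ^ 2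
      ∂μ.prod (Measure.pi fun _ => laplace 0 b) ≤ d) :
    ∫ w, totalTrimError n j τ τ' w.1 w.2 ^ 2 ∂μ.prod (Measure.pi fun _ => laplace 0 b) ≤
      (n - j : ℕ) * ((n - j : ℕ) * d) := by
  refine (integral_sq_sum_le fun _ => h.memLp_trimError_eval hb hτ hτ' _ _).trans ?_
  rw [Fintype.card_fin]
  gcongr
  exact (Finset.sum_le_sum fun i _ => hd _ _).trans_eq (by simp)

lemma memLp_errorTerm (h : IsCenteredGaussian μ S) (a : ℝ) (hb : 0 < b) (hb' : 0 < b')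
    (hτ : 0 ≤ τ) (hτ' : 0 ≤ τ') (k : Fin 4) :
    MemLp (errorTerm n j a τ τ' k) 2 (privatizedLaw μ b b') := by
  have := h.isProbabilityMeasure
  have hXξ := measurePreserving_sample_noise (μ := μ) hb hb'
  fin_cases k
  · exact (h.memLp_samplingError a).comp_measurePreserving (measurePreserving_sample hb hb')
  · exact (h.memLp_inputNoiseError hb).comp_measurePreserving hXξ
  · exact (memLp_outputNoiseError hb').comp_measurePreserving
      (measurePreserving_output_noise hb hb')
  · exact (h.memLp_totalTrimError hb hτ hτ').comp_measurePreserving hXξ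

lemma sum_integral_errorTerm_sq_le (h : IsCenteredGaussian μ (toeplitz n σ))
    (hS : (toeplitz n σ).PosSemidef) (hσ : ∀ k, σ (-k) = σ k)
    (hsum : Summable fun k => σ k ^ 2) (hb : 0 < b) (hb' : 0 < b') (hτ : 0 ≤ τ) (hτ' : 0 ≤ τ')
    {d : ℝ} (hd : ∀ p q : Fin n, ∫ w, trimError τ τ' (w.1 p) (w.1 q) (w.2 p) ^ 2
      ∂μ.prod (Measure.pi fun _ => laplace 0 b) ≤ d) :
    ∑ k, ∫ w, errorTerm n j (σ j) τ τ' k w ^ 2 ∂privatizedLaw μ b b' ≤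
      (n - j : ℕ) *
        (2 * ∑' k, σ k ^ 2 + 2 * b ^ 2 * σ 0 + 2 * b' ^ 2 + (n - j : ℕ) * d) := by
  have := h.isProbabilityMeasure
  have hXξ := measurePreserving_sample_noise (μ := μ) hb hb'
  have hsampling := (integral_sq_comp_of_measurePreserving (measurePreserving_sample hb hb')
    (h.memLp_samplingError (j := j) (σ j))).trans_le (h.integral_samplingError_sq_le hS hσ hsum)
  have hinput := (integral_sq_comp_of_measurePreserving hXξ
    (h.memLp_inputNoiseError (j := j) hb)).trans (h.integral_inputNoiseError_sq hS hb)
  have houtput := (integral_sq_comp_of_measurePreserving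
    (measurePreserving_output_noise (μ := μ) hb hb')
    (memLp_outputNoiseError (j := j) hb')).trans (integral_outputNoiseError_sq hb')
  have htrim := (integral_sq_comp_of_measurePreserving hXξ
    (h.memLp_totalTrimError (j := j) hb hτ hτ')).trans_le
    (h.integral_totalTrimError_sq_le hb hτ hτ' hd)
  rw [Fin.sum_univ_four]
  refine (add_le_add (add_le_add (add_le_add hsampling hinput.le) houtput.le) htrim).trans_eq ?_
  ring

lemma lintegral_sq_sigmaHat_sub_le (h : IsCenteredGaussian μ (toeplitz n σ))
    (hS : (toeplitz n σ).PosSemidef) (hσ : ∀ k, σ (-k) = σ k)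
    (hsum : Summable fun k => σ k ^ 2) (hj : j < n) (hb : 0 < b) (hb' : 0 < b') (hτ : 0 ≤ τ)
    (hτ' : 0 ≤ τ') {d : ℝ}
    (hd : ∀ p q : Fin n, ∫ w, trimError τ τ' (w.1 p) (w.1 q) (w.2 p) ^ 2
      ∂μ.prod (Measure.pi fun _ => laplace 0 b) ≤ d) :
    ∫⁻ w, ENNReal.ofReal ((sigmaHat n j τ τ' w - σ j) ^ 2) ∂privatizedLaw μ b b' ≤
      ENNReal.ofReal
        (4 / ((n : ℝ) - j) * (2 * ∑' k, σ k ^ 2 + 2 * b ^ 2 * σ 0 + 2 * b' ^ 2) + 4 * d) := by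
  have hm : 0 < (n : ℝ) - j := sub_pos.2 (Nat.cast_lt.2 hj)
  simp only [sigmaHat_sub_eq hj]
  refine (lintegral_sq_mul_sum_le (h.memLp_errorTerm (σ j) hb hb' hτ hτ') _).trans
    (ENNReal.ofReal_le_ofReal ?_)
  rw [Fintype.card_fin]
  calc ((n : ℝ) - j)⁻¹ ^ 2 *
        ((4 : ℕ) * ∑ k, ∫ w, errorTerm n j (σ j) τ τ' k w ^ 2 ∂privatizedLaw μ b b')
      ≤ ((n : ℝ) - j)⁻¹ ^ 2 * ((4 : ℕ) * ((n - j : ℕ) *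
        (2 * ∑' k, σ k ^ 2 + 2 * b ^ 2 * σ 0 + 2 * b' ^ 2 + (n - j : ℕ) * d))) := by
        gcongr
        exact h.sum_integral_errorTerm_sq_le hS hσ hsum hb hb' hτ hτ' hd
    _ = _ := by
      rw [Nat.cast_sub hj.le, Nat.cast_ofNat]
      field_simp

end IsCenteredGaussian

end MeanSquaredError

section Asymptotics

lemma eventually_mul_log_le {δ : ℝ} (hδ : 0 < δ) (C : ℝ) :
    ∀ᶠ n : ℕ in Filter.atTop, C * log n ≤ log n ^ (1 + δ) := by
  have hlog : Filter.Tendsto (fun n : ℕ => log n) Filter.atTop Filter.atTop :=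
    tendsto_log_atTop.comp tendsto_natCast_atTop_atTop
  filter_upwards [((tendsto_rpow_atTop hδ).comp hlog).eventually_ge_atTop C,
    hlog.eventually_gt_atTop 0] with n hn hpos
  rw [rpow_add hpos, rpow_one, mul_comm]
  exact mul_le_mul_of_nonneg_left hn hpos.le

lemma eventually_add_mul_log_rpow_pow_le (a C C' : ℝ) (k : ℕ) :
    ∀ᶠ n : ℕ in Filter.atTop, C + C' * (log n ^ a) ^ k ≤ n := by
  have hlog : (fun x : ℝ => C' * (log x ^ a) ^ k) =o[Filter.atTop] fun x => x := by
    refine Asymptotics.IsLittleO.const_mul_left ?_ C'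
    refine (isLittleO_log_rpow_rpow_atTop (a * k) one_pos).congr' ?_ (by simp)
    filter_upwards [Filter.eventually_ge_atTop 1] with x hx
    rw [rpow_mul (log_nonneg hx), rpow_natCast]
  have hle := tendsto_natCast_atTop_atTop.eventually
    (((Asymptotics.isLittleO_const_id_atTop C).add hlog).bound one_pos)
  filter_upwards [hle] with n hn
  simpa using (le_abs_self _).trans hn

lemma exp_neg_le_inv_pow_four {x n : ℝ} (hn : 0 < n) (hx : 4 * log n ≤ x) :
    rexp (-x) ≤ 1 / n ^ 4 := by
  have hlog : log (n ^ 4) = 4 * log n := by simp [log_pow]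
  rw [one_div, ← exp_log (pow_pos hn 4), ← exp_neg, hlog]
  exact exp_le_exp.2 (neg_le_neg hx)

end Asymptotics

section Rate

variable {n j : ℕ} {σ : ℤ → ℝ} {μ : Measure (Fin n → ℝ)} {M₁ : ℝ}

namespace IsCenteredGaussian

lemma integral_trimError_eval_sq_le_inv {S : Matrix (Fin n) (Fin n) ℝ}
    (h : IsCenteredGaussian μ S) {v α L N : ℝ} (hv : 0 < v) (hSv : ∀ p, S p p ≤ v) (hα : 0 < α)
    (hN : 5 ≤ N) (hL : 1 ≤ L) (hLv : v * log N ≤ L) (hLα : 16 / (15 * α) * log N ≤ L)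
    (hLN : 64 * (Nat.factorial 8 * (6 * rexp (v / 2))) +
      64 * (Nat.factorial 8 * (8 ^ 4 * (4 / α) ^ 8)) * L ^ 4 ≤ N) (p q : Fin n) :
    ∫ w, trimError (√(8 * L)) (16 * L * √(8 * L) ^ 2) (w.1 p) (w.1 q) (w.2 p) ^ 2
      ∂μ.prod (Measure.pi fun _ => laplace 0 (4 * √(8 * L) / α)) ≤ 1 / N := by
  have hN0 : 0 < N := by linarith
  have hτ2 : √(8 * L) ^ 2 = 8 * L := sq_sqrt (by positivity)
  have hτ : 0 < √(8 * L) := sqrt_pos.2 (by positivity)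
  set τ := √(8 * L)
  lift v to NNReal using hv.le
  refine h.integral_trimError_eval_sq_le hSv (by positivity) hτ.le
    (t := 15 * L * τ) (by positivity) ?_ hN ?_ ?_ ?_ p q
  · nlinarith
  · rw [neg_div]
    refine exp_neg_le_inv_pow_four hN0 ?_
    rw [hτ2, le_div_iff₀ (by positivity)]
    linarith
  · rw [neg_div]
    refine exp_neg_le_inv_pow_four hN0 ?_
    have hratio : 15 * L * τ / (4 * τ / α) = 15 * α / 4 * L := by field_simp
    rw [hratio]
    refine le_of_eq_of_le ?_ (mul_le_mul_of_nonneg_left hLα (by positivity))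
    field_simp
    ring
  · have hb8 : (4 * τ / α) ^ 8 = 8 ^ 4 * (4 / α) ^ 8 * L ^ 4 := by
      calc (4 * τ / α) ^ 8 = (4 / α) ^ 8 * (τ ^ 2) ^ 4 := by ring
        _ = _ := by
          rw [hτ2]
          ring
    rw [hb8]
    linarith

end IsCenteredGaussian

lemma four_div_mul_add_le_mul_max {N m M A θ L α : ℝ} (hN : 0 < N) (hθ : θ < 1)
    (hm : (1 - θ) * N ≤ m) (hM : 0 ≤ M) (hA : 0 ≤ A) (hL : 1 ≤ L) (hα : 0 < α) :
    4 / m * (M + A * (L ^ 4 / α ^ 2)) + 4 * (1 / N) ≤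
      (4 / (1 - θ) * (M + A) + 4) * max (1 / N) (L ^ 4 / (N * α ^ 2)) := by
  have hθ' : 0 < 1 - θ := sub_pos.2 hθ
  have hle : 1 / N ≤ max (1 / N) (L ^ 4 / (N * α ^ 2)) := le_max_left _ _
  have hle' : L ^ 4 / (N * α ^ 2) ≤ max (1 / N) (L ^ 4 / (N * α ^ 2)) := le_max_right _ _
  set r := max (1 / N) (L ^ 4 / (N * α ^ 2))
  calc 4 / m * (M + A * (L ^ 4 / α ^ 2)) + 4 * (1 / N)
      ≤ 4 / ((1 - θ) * N) * (M + A * (L ^ 4 / α ^ 2)) + 4 * (1 / N) := by gcongr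
    _ = 4 / (1 - θ) * (M * (1 / N) + A * (L ^ 4 / (N * α ^ 2))) + 4 * (1 / N) := by
      field_simp
    _ ≤ 4 / (1 - θ) * (M * r + A * r) + 4 * r := by gcongr
    _ = _ := by ring

/-- Here `L` stands for `log^{1+δ} n`. -/
lemma IsCenteredGaussian.lintegral_sq_sigmaHat_sub_le_of_log_le
    (h : IsCenteredGaussian μ (toeplitz n σ)) (hS : (toeplitz n σ).PosSemidef)
    (hσ : ∀ k, σ (-k) = σ k) (hsum : Summable fun k => σ k ^ 2) (hM : ∑' k, σ k ^ 2 ≤ M₁)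
    (hM₁ : 0 < M₁) {L α θ : ℝ} (hα : 0 < α) (hθ : θ < 1) (hn : 5 ≤ n) (hj : j ≤ θ * n)
    (hL : 1 ≤ L) (hLs : √M₁ * log n ≤ L) (hLα : 16 / (15 * α) * log n ≤ L)
    (hLn : 64 * (Nat.factorial 8 * (6 * rexp (√M₁ / 2))) +
      64 * (Nat.factorial 8 * (8 ^ 4 * (4 / α) ^ 8)) * L ^ 4 ≤ n) :
    ∫⁻ w, ENNReal.ofReal ((sigmaHat n j (√(8 * L)) (16 * L * √(8 * L) ^ 2) w - σ j) ^ 2)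
        ∂privatizedLaw μ (4 * √(8 * L) / α) (4 * (16 * L * √(8 * L) ^ 2) / α) ≤
      ENNReal.ofReal ((4 / (1 - θ) * (2 * M₁ + (256 * √M₁ + 524288)) + 4) *
        max (1 / (n : ℝ)) (L ^ 4 / (n * α ^ 2))) := by
  have hn0 : (0 : ℝ) < n := by positivity
  have hjn : j < n := Nat.cast_lt.1 (hj.trans_lt (mul_lt_of_lt_one_left hn0 hθ))
  have hτ2 : √(8 * L) ^ 2 = 8 * L := sq_sqrt (by positivity)
  have hτ : 0 < √(8 * L) := sqrt_pos.2 (by positivity)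
  have hσ0 : σ 0 ≤ √M₁ :=
    le_sqrt_of_sq_le ((hsum.le_tsum 0 fun _ _ => sq_nonneg _).trans hM)
  have htrim := h.integral_trimError_eval_sq_le_inv (N := n) (sqrt_pos.2 hM₁)
    (fun p => (toeplitz_self p).trans_le hσ0) hα (by exact_mod_cast hn) hL hLs hLα hLn
  refine (h.lintegral_sq_sigmaHat_sub_le hS hσ hsum hjn (by positivity) (by positivity) hτ.le
    (by positivity) htrim).trans (ENNReal.ofReal_le_ofReal ?_)
  refine le_trans ?_ (four_div_mul_add_le_mul_max (m := n - j) hn0 hθ (by linarith) (by positivity)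
    (by positivity) hL hα)
  have hnj : (0 : ℝ) < n - j := sub_pos.2 (Nat.cast_lt.2 hjn)
  have hinput : 2 * (4 * √(8 * L) / α) ^ 2 * σ 0 ≤ 256 * √M₁ * (L ^ 4 / α ^ 2) := by
    calc 2 * (4 * √(8 * L) / α) ^ 2 * σ 0 = 256 * (L / α ^ 2) * σ 0 := by
          rw [div_pow, mul_pow, hτ2]
          ring
      _ ≤ 256 * (L / α ^ 2) * √M₁ := by gcongr
      _ ≤ 256 * (L ^ 4 / α ^ 2) * √M₁ := by
        gcongr
        exact le_self_pow₀ hL four_ne_zero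
      _ = _ := by ring
  have houtput : 2 * (4 * (16 * L * √(8 * L) ^ 2) / α) ^ 2 = 524288 * (L ^ 4 / α ^ 2) := by
    rw [hτ2]
    ring
  have htotal : 2 * ∑' k, σ k ^ 2 + 2 * (4 * √(8 * L) / α) ^ 2 * σ 0 +
      2 * (4 * (16 * L * √(8 * L) ^ 2) / α) ^ 2 ≤
      2 * M₁ + (256 * √M₁ + 524288) * (L ^ 4 / α ^ 2) := by linarith
  gcongr

theorem interactive_covariance_rate_general {M₁ θ : ℝ} (hM₁ : 0 < M₁) (hθ : θ < 1) :
    ∃ c : ℝ, 0 < c ∧ ∀ δ : ℝ, 0 < δ → ∀ α : ℝ, 0 < α → ∀ᶠ n : ℕ in Filter.atTop,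
      ∀ σ : ℤ → ℝ, (∀ k, σ (-k) = σ k) → (toeplitz n σ).PosSemidef →
        Summable (fun k => σ k ^ 2) → ∑' k, σ k ^ 2 ≤ M₁ →
      ∀ μ : Measure (Fin n → ℝ), IsCenteredGaussian μ (toeplitz n σ) →
      ∀ j : ℕ, j ≤ θ * n →
        ∫⁻ w, ENNReal.ofReal ((sigmaHat n j (√(8 * log n ^ (1 + δ)))
            (16 * log n ^ (1 + δ) * √(8 * log n ^ (1 + δ)) ^ 2) w - σ j) ^ 2)
          ∂privatizedLaw μ (4 * √(8 * log n ^ (1 + δ)) / α)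
            (4 * (16 * log n ^ (1 + δ) * √(8 * log n ^ (1 + δ)) ^ 2) / α) ≤
        ENNReal.ofReal (c * max (1 / (n : ℝ)) (log n ^ (4 + 4 * δ) / (n * α ^ 2))) := by
  have : 0 < 1 - θ := sub_pos.2 hθ
  refine ⟨4 / (1 - θ) * (2 * M₁ + (256 * √M₁ + 524288)) + 4, by positivity, fun δ hδ α hα => ?_⟩
  filter_upwards [Filter.eventually_ge_atTop 5, eventually_mul_log_le hδ 1,
    (tendsto_log_atTop.comp tendsto_natCast_atTop_atTop).eventually_ge_atTop 1,
    eventually_mul_log_le hδ √M₁, eventually_mul_log_le hδ (16 / (15 * α)),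
    eventually_add_mul_log_rpow_pow_le (1 + δ) (64 * (Nat.factorial 8 * (6 * rexp (√M₁ / 2))))
      (64 * (Nat.factorial 8 * (8 ^ 4 * (4 / α) ^ 8))) 4] with
    n hn hlogL hlog hLs hLα hLn σ hσ hS hsum hM μ h j hj
  have hlog1 : 1 ≤ log n := hlog
  have hpow : (log n ^ (1 + δ)) ^ 4 = log n ^ (4 + 4 * δ) := by
    rw [← rpow_mul_natCast (by linarith)]
    congr 1
    push_cast
    ring
  rw [← hpow]
  exact h.lintegral_sq_sigmaHat_sub_le_of_log_le hS hσ hsum hM hM₁ hα hθ hn hj (by linarith)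
    hLs hLα hLn

end Rate

/-- Rate of convergence of the interactive private estimator of a covariance
coefficient: the mean squared error is at most `c · max{1/n, log^{4+4δ}(n)/(nα²)}`. -/
theorem interactive_covariance_rate
    (δ M₁ : ℝ) (hδ : 0 < δ) (hM₁ : 0 < M₁)
    (R : ℕ → ℕ) (hR : ∀ n, 2 ≤ n → 0 < R n ∧ R n < n)
    (hRlim : Filter.Tendsto (fun n => (R n : ℝ) / n) Filter.atTop (nhds 0)) :
    ∃ c : ℝ, 0 < c ∧
      ∀ α : ℝ, α ∈ Set.Ioo (0 : ℝ) 1 →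
        ∃ N : ℕ, ∀ n : ℕ, N ≤ n →
          ∀ σ : ℤ → ℝ, (∀ k, σ (-k) = σ k) → (toeplitz n σ).PosSemidef →
            Summable (fun k : ℤ => σ k ^ 2) → (∑' k : ℤ, σ k ^ 2) ≤ M₁ →
          ∀ μX : Measure (Fin n → ℝ), IsProbabilityMeasure μX →
            IsCenteredGaussian μX (toeplitz n σ) →
          ∀ j : ℕ, 1 ≤ j → j ≤ R n →
            (∫⁻ w : (Fin n → ℝ) × (Fin n → ℝ) × (Fin n → ℝ),
                ENNReal.ofReal
                  ((sigmaHat n j (Real.sqrt (8 * Real.log n ^ (1 + δ)))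
                      (16 * Real.log n ^ (1 + δ) * Real.sqrt (8 * Real.log n ^ (1 + δ)) ^ 2) w -
                    σ (j : ℤ)) ^ 2)
              ∂(μX.prod
                  ((Measure.pi fun _ : Fin n =>
                      laplace 0 (4 * Real.sqrt (8 * Real.log n ^ (1 + δ)) / α)).prod
                    (Measure.pi fun _ : Fin n =>
                      laplace 0
                        (4 * (16 * Real.log n ^ (1 + δ) *
                          Real.sqrt (8 * Real.log n ^ (1 + δ)) ^ 2) / α))))) ≤
              ENNReal.ofReal
                (c * max (1 / (n : ℝ)) (Real.log n ^ (4 + 4 * δ) / (n * α ^ 2))) := by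
  obtain ⟨c, hc, hrate⟩ :=
    interactive_covariance_rate_general (θ := 1 / 2) hM₁ one_half_lt_one
  refine ⟨c, hc, fun α hα => Filter.eventually_atTop.1 ?_⟩
  filter_upwards [hrate δ hδ α hα.1, hRlim.eventually_le_const one_half_pos,
    Filter.eventually_gt_atTop 0] with n hn hRn hn0 σ hσ hS hsum hM μX _ hX j _ hj
  refine hn σ hσ hS hsum hM μX hX j ((Nat.cast_le.2 hj).trans ?_)
  exact (div_le_iff₀ (by positivity)).1 hRn
end

section
/- Let α > 0. Let q : ℝ × ℝ → [0, ∞) be measurable with ∫_ℝ q(z, x) dz = 1 for every x ∈ ℝ, and suppose q(z, x) ≤ e^α · q(z, x') for all z, x, x' ∈ ℝ. Let p : ℝ → (0, ∞) be measurable with ∫ p = 1, and let ṗ : ℝ → ℝ be integrable with ∫ ṗ = 0 and ∫ ṗ(x)²/p(x) dx < ∞. Define m(z) := ∫ q(z, x) p(x) dx and ṁ(z) := ∫ q(z, x) ṗ(x) dx. Then ∫ ṁ(z)²/m(z) dz ≤ (e^α − 1)² · ∫ ṗ(x)²/p(x) dx, where the integrand ṁ(z)²/m(z) is interpreted as 0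 whenever m(z) = 0. (This is the density-level form of the first inequality of the paper's Fisher-information lemma: the Fisher information of a privatized observation is contracted by the factor (e^α − 1)² relative to that of the raw observation.) -/
open MeasureTheory Real

/-!
Let `P` be the law of `X` and `s = ṗ / p` its score. Since `s` has mean zero under `P`, `ṁ(z)` is
the covariance of `q(z, ·)` and `s`, and by Cauchy–Schwarz its square is at most
`Var(q(z, ·)) * Var(s)`, where `Var(s)` is the Fisher information of `X`. The privacy constraint
puts `q(z, ·)` between `a` and `e ^ α * a` for some `a`, so the Bhatia–Davis inequality bounds its
variance by `(e ^ α - 1) ^ 2 / (4 * e ^ α) * m(z) ^ 2`. One factor `m(z)` cancels, the other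
integrates to `1`. The resulting constant `(e ^ α - 1) ^ 2 / (4 * e ^ α)` is `sinh (α / 2) ^ 2`.
-/

open ProbabilityTheory

section Variance

variable {Ω : Type*} [MeasurableSpace Ω] {μ : Measure Ω}

lemma covariance_sq_le_variance_mul_variance [IsFiniteMeasure μ] {X Y : Ω → ℝ}
    (hX : MemLp X 2 μ) (hY : MemLp Y 2 μ) :
    cov[X, Y; μ] ^ 2 ≤ Var[X; μ] * Var[Y; μ] := by
  have hdiscrim : discrim Var[Y; μ] (2 * cov[X, Y; μ]) Var[X; μ] ≤ 0 :=
    discrim_le_zero fun t ↦ by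
      calc 0 ≤ Var[X + t • Y; μ] := variance_nonneg _ _
        _ = Var[Y; μ] * (t * t) + 2 * cov[X, Y; μ] * t + Var[X; μ] := by
          rw [variance_add hX (hY.const_smul t), covariance_smul_right, variance_smul]
          ring
  rw [discrim] at hdiscrim
  linarith

variable {c : ℝ} {f : Ω → ℝ}

lemma memLp_of_forall_le_mul [IsFiniteMeasure μ] (p : ENNReal) (hf : AEStronglyMeasurable f μ)
    (hf_nonneg : ∀ x, 0 ≤ f x) (hfc : ∀ x y, f x ≤ c * f y) : MemLp f p μ := by
  rcases isEmpty_or_nonempty Ω with _ | ⟨⟨x₀⟩⟩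
  · rw [Subsingleton.elim f 0]
    exact MemLp.zero
  · exact memLp_of_bounded (.of_forall fun x ↦ ⟨hf_nonneg x, hfc x x₀⟩) hf p

lemma variance_le_of_forall_le_mul [IsProbabilityMeasure μ] (hc : 0 < c) (hf : AEMeasurable f μ)
    (hf_nonneg : ∀ x, 0 ≤ f x) (hfc : ∀ x y, f x ≤ c * f y) :
    Var[f; μ] ≤ (c - 1) ^ 2 / (4 * c) * μ[f] ^ 2 := by
  have : Nonempty Ω := μ.nonempty_of_neZero
  set a := ⨅ x, f x
  have hf_mem (x : Ω) : f x ∈ Set.Icc a (c * a) := by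
    refine ⟨ciInf_le ⟨0, Set.forall_mem_range.2 hf_nonneg⟩ x, ?_⟩
    rw [Real.mul_iInf_of_nonneg hc.le]
    exact le_ciInf (hfc x)
  calc Var[f; μ] ≤ (c * a - μ[f]) * (μ[f] - a) :=
        variance_le_sub_mul_sub (.of_forall hf_mem) hf
    -- Completing the square bounds the product uniformly in the unknown `a`.
    _ = (c - 1) ^ 2 / (4 * c) * μ[f] ^ 2 - (2 * c * a - (c + 1) * μ[f]) ^ 2 / (4 * c) := by
        field_simp
        ring
    _ ≤ (c - 1) ^ 2 / (4 * c) * μ[f] ^ 2 := sub_le_self _ (by positivity)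

lemma covariance_sq_div_integral_le_of_forall_le_mul [IsProbabilityMeasure μ] {s : Ω → ℝ}
    (hc : 0 < c) (hf : AEStronglyMeasurable f μ) (hf_nonneg : ∀ x, 0 ≤ f x)
    (hfc : ∀ x y, f x ≤ c * f y) (hs : MemLp s 2 μ) :
    cov[f, s; μ] ^ 2 / μ[f] ≤ (c - 1) ^ 2 / (4 * c) * Var[s; μ] * μ[f] := by
  have hvar_nonneg : 0 ≤ Var[s; μ] := variance_nonneg s μ
  have hmean_nonneg : 0 ≤ μ[f] := integral_nonneg hf_nonneg
  refine div_le_of_le_mul₀ hmean_nonneg (by positivity) ?_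
  calc cov[f, s; μ] ^ 2
      ≤ Var[f; μ] * Var[s; μ] :=
        covariance_sq_le_variance_mul_variance (memLp_of_forall_le_mul 2 hf hf_nonneg hfc) hs
    _ ≤ (c - 1) ^ 2 / (4 * c) * μ[f] ^ 2 * Var[s; μ] := by
        gcongr
        exact variance_le_of_forall_le_mul hc hf.aemeasurable hf_nonneg hfc
    _ = (c - 1) ^ 2 / (4 * c) * Var[s; μ] * μ[f] * μ[f] := by ring

end Variance

section Mixture

variable {𝓧 𝓩 : Type*} [MeasurableSpace 𝓧] [MeasurableSpace 𝓩]
  {P : Measure 𝓧} [IsProbabilityMeasure P] {ν : Measure 𝓩} [SFinite ν] {q : 𝓩 → 𝓧 → ℝ}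

lemma lintegral_ofReal_integral_eq_one (hq_meas : Measurable (Function.uncurry q))
    (hq_nonneg : ∀ z x, 0 ≤ q z x) (hq_int : ∀ x, ∫ z, q z x ∂ν = 1)
    (hqP : ∀ z, Integrable (q z) P) :
    ∫⁻ z, ENNReal.ofReal (∫ x, q z x ∂P) ∂ν = 1 :=
  calc ∫⁻ z, ENNReal.ofReal (∫ x, q z x ∂P) ∂ν
      = ∫⁻ z, ∫⁻ x, ENNReal.ofReal (q z x) ∂P ∂ν := lintegral_congr fun z ↦
        ofReal_integral_eq_lintegral_ofReal (hqP z) (.of_forall (hq_nonneg z))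
    _ = ∫⁻ x, ∫⁻ z, ENNReal.ofReal (q z x) ∂ν ∂P :=
        lintegral_lintegral_swap hq_meas.ennreal_ofReal.aemeasurable
    _ = ∫⁻ _, 1 ∂P := lintegral_congr fun x ↦ by
        rw [← ofReal_integral_eq_lintegral_ofReal (integrable_of_integral_eq_one (hq_int x))
          (.of_forall (hq_nonneg · x)), hq_int, ENNReal.ofReal_one]
    _ = 1 := by simp

lemma lintegral_covariance_sq_div_integral_le {c : ℝ} {s : 𝓧 → ℝ} (hc : 0 < c)
    (hq_meas : Measurable (Function.uncurry q)) (hq_nonneg : ∀ z x, 0 ≤ q z x)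
    (hq_int : ∀ x, ∫ z, q z x ∂ν = 1) (hqc : ∀ z x x', q z x ≤ c * q z x') (hs : MemLp s 2 P) :
    ∫⁻ z, ENNReal.ofReal (cov[q z, s; P] ^ 2 / ∫ x, q z x ∂P) ∂ν ≤
      ENNReal.ofReal ((c - 1) ^ 2 / (4 * c) * Var[s; P]) := by
  have hqz_meas (z : 𝓩) : AEStronglyMeasurable (q z) P :=
    hq_meas.of_uncurry_left.aestronglyMeasurable
  have hqz_int (z : 𝓩) : Integrable (q z) P :=
    memLp_one_iff_integrable.1 (memLp_of_forall_le_mul 1 (hqz_meas z) (hq_nonneg z) (hqc z))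
  have hbound_nonneg : 0 ≤ (c - 1) ^ 2 / (4 * c) * Var[s; P] :=
    mul_nonneg (by positivity) (variance_nonneg s P)
  calc ∫⁻ z, ENNReal.ofReal (cov[q z, s; P] ^ 2 / ∫ x, q z x ∂P) ∂ν
      ≤ ∫⁻ z, ENNReal.ofReal ((c - 1) ^ 2 / (4 * c) * Var[s; P]) *
          ENNReal.ofReal (∫ x, q z x ∂P) ∂ν := lintegral_mono fun z ↦ by
        rw [← ENNReal.ofReal_mul hbound_nonneg]
        exact ENNReal.ofReal_le_ofReal <| covariance_sq_div_integral_le_of_forall_le_mul hc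
          (hqz_meas z) (hq_nonneg z) (hqc z) hs
    _ = ENNReal.ofReal ((c - 1) ^ 2 / (4 * c) * Var[s; P]) := by
        rw [lintegral_const_mul' _ _ ENNReal.ofReal_ne_top,
          lintegral_ofReal_integral_eq_one hq_meas hq_nonneg hq_int hqz_int, mul_one]

end Mixture

section Density

variable {𝓧 : Type*} [MeasurableSpace 𝓧] {μ : Measure 𝓧} {p pd : 𝓧 → ℝ}

lemma isProbabilityMeasure_withDensity_ofReal (hp_nonneg : ∀ x, 0 ≤ p x)
    (hp_int : ∫ x, p x ∂μ = 1) :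
    IsProbabilityMeasure (μ.withDensity fun x ↦ ENNReal.ofReal (p x)) := by
  constructor
  rw [withDensity_apply _ .univ, setLIntegral_univ, ← ofReal_integral_eq_lintegral_ofReal
    (integrable_of_integral_eq_one hp_int) (.of_forall hp_nonneg), hp_int, ENNReal.ofReal_one]

lemma integral_withDensity_ofReal (hp : AEMeasurable p μ) (hp_nonneg : ∀ x, 0 ≤ p x)
    (g : 𝓧 → ℝ) :
    ∫ x, g x ∂μ.withDensity (fun x ↦ ENNReal.ofReal (p x)) = ∫ x, p x * g x ∂μ := by
  simp only [integral_withDensity_eq_integral_toReal_smul₀ hp.ennreal_ofReal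
    (.of_forall fun _ ↦ ENNReal.ofReal_lt_top), ENNReal.toReal_ofReal (hp_nonneg _), smul_eq_mul]

lemma mul_div_self_sq {K : Type*} [Field K] (a b : K) : b * (a / b) ^ 2 = a ^ 2 / b := by
  rcases eq_or_ne b 0 with rfl | hb
  · simp
  · field_simp

lemma integral_mul_score (hp : AEMeasurable p μ) (hp_nonneg : ∀ x, 0 ≤ p x)
    (hpd_supp : ∀ x, p x = 0 → pd x = 0) (g : 𝓧 → ℝ) :
    ∫ x, g x * (pd x / p x) ∂μ.withDensity (fun x ↦ ENNReal.ofReal (p x)) =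
      ∫ x, g x * pd x ∂μ := by
  rw [integral_withDensity_ofReal hp hp_nonneg]
  congr with x
  rw [mul_left_comm, mul_div_cancel_of_imp' (hpd_supp x)]

lemma integral_score (hp : AEMeasurable p μ) (hp_nonneg : ∀ x, 0 ≤ p x)
    (hpd_supp : ∀ x, p x = 0 → pd x = 0) (hpd_zero : ∫ x, pd x ∂μ = 0) :
    ∫ x, pd x / p x ∂μ.withDensity (fun x ↦ ENNReal.ofReal (p x)) = 0 := by
  simpa only [one_mul, hpd_zero] using integral_mul_score hp hp_nonneg hpd_supp fun _ ↦ 1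

lemma aemeasurable_score (hp : AEMeasurable p μ) (hpd : AEMeasurable pd μ) :
    AEMeasurable (fun x ↦ pd x / p x) (μ.withDensity fun x ↦ ENNReal.ofReal (p x)) :=
  (hpd.div hp).mono_ac (withDensity_absolutelyContinuous _ _)

lemma memLp_two_score (hp : AEMeasurable p μ) (hp_nonneg : ∀ x, 0 ≤ p x) (hpd : AEMeasurable pd μ)
    (hFI : Integrable (fun x ↦ pd x ^ 2 / p x) μ) :
    MemLp (fun x ↦ pd x / p x) 2 (μ.withDensity fun x ↦ ENNReal.ofReal (p x)) := by
  rw [memLp_two_iff_integrable_sq (aemeasurable_score hp hpd).aestronglyMeasurable,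
    integrable_withDensity_iff_integrable_smul₀' hp.ennreal_ofReal
    (.of_forall fun _ ↦ ENNReal.ofReal_lt_top)]
  simpa only [ENNReal.toReal_ofReal (hp_nonneg _), smul_eq_mul, mul_div_self_sq] using hFI

lemma variance_score (hp : AEMeasurable p μ) (hp_nonneg : ∀ x, 0 ≤ p x) (hpd : AEMeasurable pd μ)
    (hpd_supp : ∀ x, p x = 0 → pd x = 0) (hpd_zero : ∫ x, pd x ∂μ = 0) :
    Var[fun x ↦ pd x / p x; μ.withDensity fun x ↦ ENNReal.ofReal (p x)] =
      ∫ x, pd x ^ 2 / p x ∂μ := by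
  rw [variance_of_integral_eq_zero (aemeasurable_score hp hpd)
    (integral_score hp hp_nonneg hpd_supp hpd_zero), integral_withDensity_ofReal hp hp_nonneg]
  simp only [mul_div_self_sq]

lemma covariance_score {g : 𝓧 → ℝ} (hp_nonneg : ∀ x, 0 ≤ p x) (hp_int : ∫ x, p x ∂μ = 1)
    (hpd : AEMeasurable pd μ) (hpd_supp : ∀ x, p x = 0 → pd x = 0) (hpd_zero : ∫ x, pd x ∂μ = 0)
    (hFI : Integrable (fun x ↦ pd x ^ 2 / p x) μ)
    (hg : MemLp g 2 (μ.withDensity fun x ↦ ENNReal.ofReal (p x))) :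
    cov[g, fun x ↦ pd x / p x; μ.withDensity fun x ↦ ENNReal.ofReal (p x)] =
      ∫ x, g x * pd x ∂μ := by
  have hp : AEMeasurable p μ := (integrable_of_integral_eq_one hp_int).aemeasurable
  have := isProbabilityMeasure_withDensity_ofReal hp_nonneg hp_int
  rw [covariance_eq_sub hg (memLp_two_score hp hp_nonneg hpd hFI),
    integral_score hp hp_nonneg hpd_supp hpd_zero, mul_zero, sub_zero]
  exact integral_mul_score hp hp_nonneg hpd_supp g

end Density

theorem fisher_information_contraction_general {𝓧 𝓩 : Type*} [MeasurableSpace 𝓧]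
    [MeasurableSpace 𝓩] {μ : Measure 𝓧} {ν : Measure 𝓩} [SFinite ν] (α : ℝ) {q : 𝓩 → 𝓧 → ℝ}
    (hq_meas : Measurable (Function.uncurry q)) (hq_nonneg : ∀ z x, 0 ≤ q z x)
    (hq_int : ∀ x, ∫ z, q z x ∂ν = 1) (hq_ldp : ∀ z x x', q z x ≤ exp α * q z x')
    {p : 𝓧 → ℝ} (hp_nonneg : ∀ x, 0 ≤ p x) (hp_int : ∫ x, p x ∂μ = 1)
    {pd : 𝓧 → ℝ} (hpd : AEMeasurable pd μ) (hpd_supp : ∀ x, p x = 0 → pd x = 0)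
    (hpd_zero : ∫ x, pd x ∂μ = 0) (hFI : Integrable (fun x ↦ pd x ^ 2 / p x) μ) :
    ∫⁻ z, ENNReal.ofReal ((∫ x, q z x * pd x ∂μ) ^ 2 / ∫ x, q z x * p x ∂μ) ∂ν ≤
      ENNReal.ofReal ((exp α - 1) ^ 2 / (4 * exp α) * ∫ x, pd x ^ 2 / p x ∂μ) := by
  have hp : AEMeasurable p μ := (integrable_of_integral_eq_one hp_int).aemeasurable
  set P := μ.withDensity fun x ↦ ENNReal.ofReal (p x)
  have : IsProbabilityMeasure P := isProbabilityMeasure_withDensity_ofReal hp_nonneg hp_int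
  have hqz_memLp (z : 𝓩) : MemLp (q z) 2 P :=
    memLp_of_forall_le_mul 2 hq_meas.of_uncurry_left.aestronglyMeasurable (hq_nonneg z) (hq_ldp z)
  have hcov (z : 𝓩) : cov[q z, fun x ↦ pd x / p x; P] = ∫ x, q z x * pd x ∂μ :=
    covariance_score hp_nonneg hp_int hpd hpd_supp hpd_zero hFI (hqz_memLp z)
  have hmean (z : 𝓩) : ∫ x, q z x ∂P = ∫ x, q z x * p x ∂μ := by
    simp only [P, integral_withDensity_ofReal hp hp_nonneg, mul_comm]
  simpa only [hcov, hmean, P, variance_score hp hp_nonneg hpd hpd_supp hpd_zero] using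
    lintegral_covariance_sq_div_integral_le (exp_pos α) hq_meas hq_nonneg hq_int hq_ldp
      (memLp_two_score hp hp_nonneg hpd hFI)

/-- Density-level form of the first inequality of the Fisher-information lemma:
the Fisher information of a privatized observation is contracted by the factor
`(e^α − 1)²` relative to that of the raw observation. Division by zero is `0` in
Lean, which implements the convention that `ṁ(z)²/m(z) = 0` whenever `m(z) = 0`. -/
theorem fisher_information_contraction
    (α : ℝ) (hα : 0 < α)
    (q : ℝ → ℝ → ℝ) (hq_meas : Measurable (Function.uncurry q))
    (hq_nonneg : ∀ z x, 0 ≤ q z x)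
    (hq_int : ∀ x, ∫ z, q z x = 1)
    (hq_ldp : ∀ z x x', q z x ≤ Real.exp α * q z x')
    (p : ℝ → ℝ) (hp_meas : Measurable p) (hp_pos : ∀ x, 0 < p x)
    (hp_int : ∫ x, p x = 1)
    (pd : ℝ → ℝ) (hpd_int : Integrable pd) (hpd_zero : ∫ x, pd x = 0)
    (hFI : Integrable fun x => pd x ^ 2 / p x) :
    (∫⁻ z : ℝ, ENNReal.ofReal ((∫ x, q z x * pd x) ^ 2 / ∫ x, q z x * p x)) ≤
      ENNReal.ofReal ((Real.exp α - 1) ^ 2 * ∫ x, pd x ^ 2 / p x) :=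
  (fisher_information_contraction_general α hq_meas hq_nonneg hq_int hq_ldp
    (fun x ↦ (hp_pos x).le) hp_int hpd_int.aemeasurable (fun x hx ↦ absurd hx (hp_pos x).ne')
    hpd_zero hFI).trans <| ENNReal.ofReal_le_ofReal <| mul_le_mul_of_nonneg_right
      (div_le_self (sq_nonneg _) (by linarith [one_le_exp hα.le]))
      (integral_nonneg fun x ↦ div_nonneg (sq_nonneg _) (hp_pos x).le)
end

section
/- Let α > 0 and ε > 0. Let q : ℝ × ℝ → [0, ∞) be measurable with ∫_ℝ q(z, y) dz = 1 for every y ∈ ℝ, and suppose q(z, y) ≤ e^α · q(z, y') for all z, y, y' ∈ ℝ. Let p : ℝ × ℝ → (0, ∞) be measurable with ∫∫ p = 1, and let ṗ : ℝ × ℝ → ℝ be measurable such that ṗ(x, ·) is integrable for almost every x, ∫∫ ṗ(x,y)²/p(x,y) dx dy < ∞, and, with p_X(x) := ∫ p(x, y) dy and ṗ_X(x) := ∫ ṗ(x, y) dy, also ∫ ṗ_X(x)²/p_X(x) dx < ∞. Define g(x, z) := ∫ q(z, y) p(x, y) dy and ġ(x, z) := ∫ q(z, y) ṗ(x, y) dy.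 Then ∫∫ ġ(x, z)²/g(x, z) dz dx ≤ (1 + 1/ε)(e^α − 1)² · ∫∫ ṗ(x,y)²/p(x,y) dx dy + (1 + ε) e^{2α} · ∫ ṗ_X(x)²/p_X(x) dx, where integrands of the form a²/b are interpreted as 0 whenever b = 0. (This is the density-level form of inequality (term2) of the paper's Fisher-information lemma.) -/
open MeasureTheory Real

/-!
Fix `x` and write `f = p (x, ·)`, `h = pd (x, ·)`, `P = ∫ f`, `H = ∫ h`, `g z = ∫ q z y * f y` and
`g' z = ∫ q z y * h y`. Completing the square,
`g' ^ 2 / g = (g' - (H / P) * g) ^ 2 / g + 2 * (H / P) * g' - (H / P) ^ 2 * g`.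
Since `g` and `g'` integrate to `P` and `H`, the last two terms integrate to `H ^ 2 / P`, the
contribution of the marginal. In the first one, `g' - (H / P) * g` is the integral of `h` against
the deviation of `q z` from its `f`-average `g / P`; privacy makes this deviation at most
`(exp α - 1) * g / P`, and the Cauchy–Schwarz inequality then gives a contribution of at most
`(exp α - 1) ^ 2 * ∫ h ^ 2 / f`. Integrating over `x` yields the theorem with the coefficients
`1 + 1 / ε` and `(1 + ε) * exp (2 * α)` both improved to `1`.
-/

section Weight

variable {Y : Type*} [MeasurableSpace Y] {ν : Measure Y} {k f h : Y → ℝ} {E : ℝ}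

theorem integral_pos_of_forall_pos [NeZero ν] (hf_pos : ∀ y, 0 < f y) (hf : Integrable f ν) :
    0 < ∫ y, f y ∂ν := by
  rw [integral_pos_iff_support_of_nonneg (fun y => (hf_pos y).le) hf,
    Function.support_eq_univ fun y => (hf_pos y).ne']
  exact Measure.measure_univ_pos.2 (NeZero.ne ν)

theorem integrable_of_integrable_sq_div (hf_pos : ∀ y, 0 < f y) (hf : Integrable f ν)
    (hh : AEStronglyMeasurable h ν) (hhf : Integrable (fun y => h y ^ 2 / f y) ν) :
    Integrable h ν := by
  refine (hf.add hhf).mono' hh (.of_forall fun y => ?_)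
  have hy := hf_pos y
  have hsq : f y + h y ^ 2 / f y - |h y| = ((f y - |h y|) ^ 2 + f y * |h y|) / f y := by
    rw [← sq_abs (h y)]
    field_simp
    ring
  exact sub_nonneg.1 (hsq ▸ by positivity)

theorem sq_integral_le_integral_mul_integral_sq_div (hf_pos : ∀ y, 0 < f y)
    (hf : Integrable f ν) (hh : Integrable h ν) (hhf : Integrable (fun y => h y ^ 2 / f y) ν) :
    (∫ y, h y ∂ν) ^ 2 ≤ (∫ y, f y ∂ν) * ∫ y, h y ^ 2 / f y ∂ν := by
  have hlin (c : ℝ) : Integrable (fun y => c * c * f y + -2 * c * h y) ν :=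
    (hf.const_mul _).add (hh.const_mul _)
  have hquad (c : ℝ) :
      0 ≤ (∫ y, f y ∂ν) * (c * c) + -2 * (∫ y, h y ∂ν) * c + ∫ y, h y ^ 2 / f y ∂ν :=
    calc 0 ≤ ∫ y, (c * f y - h y) ^ 2 / f y ∂ν :=
          integral_nonneg fun y => div_nonneg (sq_nonneg _) (hf_pos y).le
      _ = ∫ y, (c * c * f y + -2 * c * h y + h y ^ 2 / f y) ∂ν := by
          refine integral_congr_ae (.of_forall fun y => ?_)
          have hy := (hf_pos y).ne'
          field_simp
          ring
      _ = _ := by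
          rw [integral_add (hlin c) hhf, integral_add (hf.const_mul _) (hh.const_mul _),
            integral_const_mul, integral_const_mul]
          ring
  have hdiscrim := discrim_le_zero hquad
  rw [discrim] at hdiscrim
  linarith

theorem one_le_of_integral_eq_one_of_le_mul (hk_nonneg : ∀ y, 0 ≤ k y) (hk_int : ∫ y, k y ∂ν = 1)
    (hk : ∀ y, k y ≤ E * k y) : 1 ≤ E := by
  obtain ⟨y, hy⟩ : ∃ y, k y ≠ 0 := by
    by_contra! hzero
    simp [hzero] at hk_int
  exact (le_mul_iff_one_le_left ((hk_nonneg y).lt_of_ne' hy)).1 (hk y)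

theorem abs_sub_le_of_le_mul {a b : ℝ} (hE : 1 ≤ E) (hb : 0 ≤ b) (hab : a ≤ E * b)
    (hba : b ≤ E * a) : |a - b| ≤ (E - 1) * b := by
  refine abs_le.2 ⟨?_, by linarith⟩
  have hmul : 0 ≤ E * (a - (2 - E) * b) := by nlinarith [mul_nonneg (sq_nonneg (E - 1)) hb]
  linarith [nonneg_of_mul_nonneg_right hmul (by linarith)]

theorem abs_mul_integral_sub_integral_mul_le (hE : 1 ≤ E) (hk_nonneg : ∀ y, 0 ≤ k y)
    (hk : ∀ y y', k y ≤ E * k y') (hf_nonneg : ∀ y, 0 ≤ f y) (hf : Integrable f ν)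
    (hkf : Integrable (fun y => k y * f y) ν) (y : Y) :
    |k y * ∫ y', f y' ∂ν - ∫ y', k y' * f y' ∂ν| ≤ (E - 1) * ∫ y', k y' * f y' ∂ν :=
  calc |k y * ∫ y', f y' ∂ν - ∫ y', k y' * f y' ∂ν|
      = |∫ y', (k y - k y') * f y' ∂ν| := by
        simp_rw [sub_mul]
        rw [integral_sub (hf.const_mul _) hkf, integral_const_mul]
    _ ≤ ∫ y', (E - 1) * (k y' * f y') ∂ν := by
        refine norm_integral_le_of_norm_le (G := ℝ) (hkf.const_mul _) (.of_forall fun y' => ?_)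
        rw [norm_mul, norm_of_nonneg (hf_nonneg y'), ← mul_assoc]
        exact mul_le_mul_of_nonneg_right
          (abs_sub_le_of_le_mul hE (hk_nonneg y') (hk y y') (hk y' y)) (hf_nonneg y')
    _ = _ := integral_const_mul _ _

theorem sq_integral_mul_mul_integral_sub_le (hE : 1 ≤ E) (hk_nonneg : ∀ y, 0 ≤ k y)
    (hk : ∀ y y', k y ≤ E * k y') (hf_pos : ∀ y, 0 < f y) (hf : Integrable f ν)
    (hh : Integrable h ν) (hhf : Integrable (fun y => h y ^ 2 / f y) ν)
    (hkf : Integrable (fun y => k y * f y) ν) (hkh : Integrable (fun y => k y * h y) ν) :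
    ((∫ y, k y * h y ∂ν) * (∫ y, f y ∂ν) - (∫ y, k y * f y ∂ν) * ∫ y, h y ∂ν) ^ 2 ≤
      ((E - 1) * ∫ y, k y * f y ∂ν) ^ 2 * ((∫ y, f y ∂ν) * ∫ y, h y ^ 2 / f y ∂ν) := by
  set P := ∫ y, f y ∂ν
  set g := ∫ y, k y * f y ∂ν
  have hdev (y : Y) : |k y * P - g| ≤ (E - 1) * g :=
    abs_mul_integral_sub_integral_mul_le hE hk_nonneg hk (fun y => (hf_pos y).le) hf hkf y
  have hcov : (∫ y, k y * h y ∂ν) * P - g * ∫ y, h y ∂ν = ∫ y, (k y * P - g) * h y ∂ν := by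
    simp_rw [sub_mul, mul_right_comm _ P]
    rw [integral_sub (hkh.mul_const _) (hh.const_mul _), integral_mul_const, integral_const_mul]
  have habs : |∫ y, (k y * P - g) * h y ∂ν| ≤ (E - 1) * g * ∫ y, |h y| ∂ν := by
    rw [← integral_const_mul]
    refine norm_integral_le_of_norm_le (G := ℝ) (hh.abs.const_mul _) (.of_forall fun y => ?_)
    rw [norm_mul]
    exact mul_le_mul_of_nonneg_right (hdev y) (abs_nonneg _)
  have hCS : (∫ y, |h y| ∂ν) ^ 2 ≤ P * ∫ y, h y ^ 2 / f y ∂ν := by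
    simpa only [sq_abs] using sq_integral_le_integral_mul_integral_sq_div hf_pos hf hh.abs
      (by simpa only [sq_abs] using hhf)
  calc ((∫ y, k y * h y ∂ν) * P - g * ∫ y, h y ∂ν) ^ 2
      = |∫ y, (k y * P - g) * h y ∂ν| ^ 2 := by rw [hcov, sq_abs]
    _ ≤ ((E - 1) * g * ∫ y, |h y| ∂ν) ^ 2 := pow_le_pow_left₀ (abs_nonneg _) habs 2
    _ = ((E - 1) * g) ^ 2 * (∫ y, |h y| ∂ν) ^ 2 := mul_pow _ _ 2
    _ ≤ _ := mul_le_mul_of_nonneg_left hCS (sq_nonneg _)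

end Weight

theorem sq_div_le_of_sq_sub_le {c g g' F H P : ℝ} (hg : 0 ≤ g) (hP : 0 < P)
    (hsq : (g' * P - g * H) ^ 2 ≤ (c * g) ^ 2 * (P * F)) :
    g' ^ 2 / g ≤ c ^ 2 * F / P * g + (2 * (H / P) * g' - (H / P) ^ 2 * g) := by
  rcases hg.eq_or_lt with rfl | hg_pos
  · have hg' : g' = 0 := by
      have : (g' * P) ^ 2 ≤ 0 := by simpa using hsq
      simpa [hP.ne'] using this.antisymm (sq_nonneg _)
    simp [hg']
  · have hsquare : g' ^ 2 / g =
        (g' * P - g * H) ^ 2 / (g * P ^ 2) + (2 * (H / P) * g' - (H / P) ^ 2 * g) := by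
      field_simp
      ring
    have hbound : (g' * P - g * H) ^ 2 / (g * P ^ 2) ≤ c ^ 2 * F / P * g := by
      rw [div_le_iff₀ (by positivity)]
      refine hsq.trans_eq ?_
      field_simp
    linarith

section Kernel

variable {Y Z : Type*} [MeasurableSpace Y] [MeasurableSpace Z] {ν : Measure Y} {κ : Measure Z}
  [SFinite ν] [SFinite κ] {q : Z → Y → ℝ} {f h : Y → ℝ} {E : ℝ}

theorem integrable_prod_kernel_mul (hq_meas : AEStronglyMeasurable (Function.uncurry q) (κ.prod ν))
    (hq_nonneg : ∀ z y, 0 ≤ q z y) (hq_int : ∀ y, ∫ z, q z y ∂κ = 1) (hh : Integrable h ν) :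
    Integrable (fun w : Z × Y => q w.1 w.2 * h w.2) (κ.prod ν) := by
  have hq (y : Y) : Integrable (fun z => q z y) κ := .of_integral_ne_zero (by simp [hq_int])
  have hqh_meas : AEStronglyMeasurable (fun w : Z × Y => q w.1 w.2 * h w.2) (κ.prod ν) :=
    hq_meas.mul hh.aestronglyMeasurable.comp_snd
  refine (integrable_prod_iff' hqh_meas).2 ⟨.of_forall fun y => (hq y).mul_const (h y), ?_⟩
  simpa only [norm_mul, norm_of_nonneg (hq_nonneg _ _), integral_mul_const, hq_int, one_mul]
    using hh.norm

theorem integral_integral_kernel_mul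
    (hq_meas : AEStronglyMeasurable (Function.uncurry q) (κ.prod ν))
    (hq_nonneg : ∀ z y, 0 ≤ q z y) (hq_int : ∀ y, ∫ z, q z y ∂κ = 1) (hh : Integrable h ν) :
    ∫ z, ∫ y, q z y * h y ∂ν ∂κ = ∫ y, h y ∂ν := by
  rw [integral_integral_swap (integrable_prod_kernel_mul hq_meas hq_nonneg hq_int hh)]
  simp only [integral_mul_const, hq_int, one_mul]

theorem ae_sq_integral_kernel_mul_div_le [NeZero ν]
    (hq_meas : AEStronglyMeasurable (Function.uncurry q) (κ.prod ν))
    (hq_nonneg : ∀ z y, 0 ≤ q z y) (hq_int : ∀ y, ∫ z, q z y ∂κ = 1)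
    (hq : ∀ z y y', q z y ≤ E * q z y') (hf_pos : ∀ y, 0 < f y) (hf : Integrable f ν)
    (hh : Integrable h ν) (hhf : Integrable (fun y => h y ^ 2 / f y) ν) :
    ∀ᵐ z ∂κ, (∫ y, q z y * h y ∂ν) ^ 2 / ∫ y, q z y * f y ∂ν ≤
      (E - 1) ^ 2 * (∫ y, h y ^ 2 / f y ∂ν) / (∫ y, f y ∂ν) * (∫ y, q z y * f y ∂ν) +
        (2 * ((∫ y, h y ∂ν) / ∫ y, f y ∂ν) * (∫ y, q z y * h y ∂ν) -
          ((∫ y, h y ∂ν) / ∫ y, f y ∂ν) ^ 2 * ∫ y, q z y * f y ∂ν) := by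
  obtain ⟨y₀⟩ := ν.nonempty_of_neZero
  have hE := one_le_of_integral_eq_one_of_le_mul (fun z => hq_nonneg z y₀) (hq_int y₀)
    fun z => hq z y₀ y₀
  filter_upwards [(integrable_prod_kernel_mul hq_meas hq_nonneg hq_int hf).prod_right_ae,
    (integrable_prod_kernel_mul hq_meas hq_nonneg hq_int hh).prod_right_ae] with z hkf hkh
  exact sq_div_le_of_sq_sub_le (integral_nonneg fun y => mul_nonneg (hq_nonneg z y) (hf_pos y).le)
    (integral_pos_of_forall_pos hf_pos hf) <|
    sq_integral_mul_mul_integral_sub_le hE (hq_nonneg z) (hq z) hf_pos hf hh hhf hkf hkh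

theorem lintegral_sq_integral_kernel_mul_div_le [NeZero ν]
    (hq_meas : AEStronglyMeasurable (Function.uncurry q) (κ.prod ν))
    (hq_nonneg : ∀ z y, 0 ≤ q z y) (hq_int : ∀ y, ∫ z, q z y ∂κ = 1)
    (hq : ∀ z y y', q z y ≤ E * q z y') (hf_pos : ∀ y, 0 < f y) (hf : Integrable f ν)
    (hh : Integrable h ν) (hhf : Integrable (fun y => h y ^ 2 / f y) ν) :
    ∫⁻ z, ENNReal.ofReal ((∫ y, q z y * h y ∂ν) ^ 2 / ∫ y, q z y * f y ∂ν) ∂κ ≤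
      ENNReal.ofReal
        ((E - 1) ^ 2 * (∫ y, h y ^ 2 / f y ∂ν) + (∫ y, h y ∂ν) ^ 2 / ∫ y, f y ∂ν) := by
  have hP := integral_pos_of_forall_pos hf_pos hf
  have hle := ae_sq_integral_kernel_mul_div_le hq_meas hq_nonneg hq_int hq hf_pos hf hh hhf
  have hg := (integrable_prod_kernel_mul hq_meas hq_nonneg hq_int hf).integral_prod_left
  have hg' := (integrable_prod_kernel_mul hq_meas hq_nonneg hq_int hh).integral_prod_left
  have hg_mass := integral_integral_kernel_mul hq_meas hq_nonneg hq_int hf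
  have hg'_mass := integral_integral_kernel_mul hq_meas hq_nonneg hq_int hh
  have hg_nonneg (z : Z) : 0 ≤ ∫ y, q z y * f y ∂ν :=
    integral_nonneg fun y => mul_nonneg (hq_nonneg z y) (hf_pos y).le
  set P := ∫ y, f y ∂ν
  set H := ∫ y, h y ∂ν
  set F := ∫ y, h y ^ 2 / f y ∂ν
  set g : Z → ℝ := fun z => ∫ y, q z y * f y ∂ν
  set g' : Z → ℝ := fun z => ∫ y, q z y * h y ∂ν
  have hcross : Integrable (fun z => 2 * (H / P) * g' z - (H / P) ^ 2 * g z) κ :=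
    (hg'.const_mul _).sub (hg.const_mul _)
  calc ∫⁻ z, ENNReal.ofReal (g' z ^ 2 / g z) ∂κ
      ≤ ∫⁻ z, ENNReal.ofReal
          ((E - 1) ^ 2 * F / P * g z + (2 * (H / P) * g' z - (H / P) ^ 2 * g z)) ∂κ :=
        lintegral_mono_ae (hle.mono fun z => ENNReal.ofReal_le_ofReal)
    _ = ENNReal.ofReal
          (∫ z, ((E - 1) ^ 2 * F / P * g z + (2 * (H / P) * g' z - (H / P) ^ 2 * g z)) ∂κ) :=
        (ofReal_integral_eq_lintegral_ofReal ((hg.const_mul _).add hcross) <| hle.mono fun z =>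
          (div_nonneg (sq_nonneg _) (hg_nonneg z)).trans).symm
    _ = ENNReal.ofReal ((E - 1) ^ 2 * F + H ^ 2 / P) := by
        rw [integral_add (hg.const_mul _) hcross, integral_sub (hg'.const_mul _) (hg.const_mul _),
          integral_const_mul, integral_const_mul, integral_const_mul, hg_mass, hg'_mass]
        congr 1
        field_simp
        ring

end Kernel

section Product

variable {X Y : Type*} [MeasurableSpace X] [MeasurableSpace Y] {μ : Measure X} {ν : Measure Y}
  [SFinite μ] [SFinite ν] {p pd : X × Y → ℝ}

theorem ae_integrable_slices_of_integrable_sq_div (hp_pos : ∀ w, 0 < p w)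
    (hp : Integrable p (μ.prod ν)) (hpd_meas : AEStronglyMeasurable pd (μ.prod ν))
    (hFI : Integrable (fun w => pd w ^ 2 / p w) (μ.prod ν)) :
    ∀ᵐ x ∂μ, Integrable (fun y => p (x, y)) ν ∧ Integrable (fun y => pd (x, y)) ν ∧
      Integrable (fun y => pd (x, y) ^ 2 / p (x, y)) ν := by
  have hpd := integrable_of_integrable_sq_div hp_pos hp hpd_meas hFI
  filter_upwards [hp.prod_right_ae, hpd.prod_right_ae, hFI.prod_right_ae] with x hpx hpdx hFIx
  exact ⟨hpx, hpdx, hFIx⟩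

theorem integrable_sq_integral_div_integral [NeZero ν] (hp_pos : ∀ w, 0 < p w)
    (hp : Integrable p (μ.prod ν)) (hpd_meas : AEStronglyMeasurable pd (μ.prod ν))
    (hFI : Integrable (fun w => pd w ^ 2 / p w) (μ.prod ν)) :
    Integrable (fun x => (∫ y, pd (x, y) ∂ν) ^ 2 / ∫ y, p (x, y) ∂ν) μ := by
  refine hFI.integral_prod_left.mono' ((hpd_meas.integral_prod_right'.pow 2).div₀
    hp.aestronglyMeasurable.integral_prod_right') ?_
  filter_upwards [ae_integrable_slices_of_integrable_sq_div hp_pos hp hpd_meas hFI]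
    with x ⟨hpx, hpdx, hFIx⟩
  have hpX := integral_pos_of_forall_pos (fun y => hp_pos (x, y)) hpx
  rw [norm_of_nonneg (div_nonneg (sq_nonneg _) hpX.le), div_le_iff₀' hpX]
  exact sq_integral_le_integral_mul_integral_sq_div (fun y => hp_pos (x, y)) hpx hpdx hFIx

end Product

theorem fisher_information_term2_general {X Y Z : Type*} [MeasurableSpace X] [MeasurableSpace Y]
    [MeasurableSpace Z] {μ : Measure X} {ν : Measure Y} {κ : Measure Z} [SFinite μ] [SFinite ν]
    [SFinite κ] {E : ℝ}
    {q : Z → Y → ℝ} (hq_meas : AEStronglyMeasurable (Function.uncurry q) (κ.prod ν))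
    (hq_nonneg : ∀ z y, 0 ≤ q z y) (hq_int : ∀ y, ∫ z, q z y ∂κ = 1)
    (hq_ldp : ∀ z y y', q z y ≤ E * q z y')
    {p pd : X × Y → ℝ} (hp_pos : ∀ w, 0 < p w) (hp : Integrable p (μ.prod ν))
    (hpd_meas : AEStronglyMeasurable pd (μ.prod ν))
    (hFI : Integrable (fun w => pd w ^ 2 / p w) (μ.prod ν)) :
    ∫⁻ x, ∫⁻ z, ENNReal.ofReal
        ((∫ y, q z y * pd (x, y) ∂ν) ^ 2 / ∫ y, q z y * p (x, y) ∂ν) ∂κ ∂μ ≤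
      ENNReal.ofReal ((E - 1) ^ 2 * (∫ w, pd w ^ 2 / p w ∂μ.prod ν) +
        ∫ x, (∫ y, pd (x, y) ∂ν) ^ 2 / ∫ y, p (x, y) ∂ν ∂μ) := by
  rcases eq_zero_or_neZero ν with rfl | _
  · simp
  have hJ : Integrable (fun x => (E - 1) ^ 2 * ∫ y, pd (x, y) ^ 2 / p (x, y) ∂ν) μ :=
    hFI.integral_prod_left.const_mul _
  have hI := integrable_sq_integral_div_integral hp_pos hp hpd_meas hFI
  have hnonneg (x : X) : 0 ≤ (E - 1) ^ 2 * (∫ y, pd (x, y) ^ 2 / p (x, y) ∂ν) +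
      (∫ y, pd (x, y) ∂ν) ^ 2 / ∫ y, p (x, y) ∂ν := by
    have hJ_nonneg : 0 ≤ ∫ y, pd (x, y) ^ 2 / p (x, y) ∂ν :=
      integral_nonneg fun y => div_nonneg (sq_nonneg _) (hp_pos _).le
    have hpX_nonneg : 0 ≤ ∫ y, p (x, y) ∂ν := integral_nonneg fun y => (hp_pos _).le
    positivity
  calc _ ≤ ∫⁻ x, ENNReal.ofReal ((E - 1) ^ 2 * (∫ y, pd (x, y) ^ 2 / p (x, y) ∂ν) +
          (∫ y, pd (x, y) ∂ν) ^ 2 / ∫ y, p (x, y) ∂ν) ∂μ := by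
        refine lintegral_mono_ae ?_
        filter_upwards [ae_integrable_slices_of_integrable_sq_div hp_pos hp hpd_meas hFI]
          with x ⟨hpx, hpdx, hFIx⟩
        exact lintegral_sq_integral_kernel_mul_div_le hq_meas hq_nonneg hq_int hq_ldp
          (fun y => hp_pos (x, y)) hpx hpdx hFIx
    _ = ENNReal.ofReal (∫ x, ((E - 1) ^ 2 * (∫ y, pd (x, y) ^ 2 / p (x, y) ∂ν) +
          (∫ y, pd (x, y) ∂ν) ^ 2 / ∫ y, p (x, y) ∂ν) ∂μ) :=
        (ofReal_integral_eq_lintegral_ofReal (hJ.add hI) (.of_forall hnonneg)).symm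
    _ = _ := by rw [integral_add hJ hI, integral_const_mul, integral_prod _ hFI]

theorem add_le_one_add_inv_mul_add_one_add_mul_exp_mul {α ε a b : ℝ} (hα : 0 ≤ α) (hε : 0 < ε)
    (ha : 0 ≤ a) (hb : 0 ≤ b) : a + b ≤ (1 + 1 / ε) * a + (1 + ε) * exp (2 * α) * b := by
  have hcoeff : 1 ≤ (1 + ε) * exp (2 * α) :=
    one_le_mul_of_one_le_of_one_le (by linarith) (one_le_exp (by positivity))
  have : 0 ≤ 1 / ε := by positivity
  nlinarith

/-- Density-level form of inequality (term2) of the Fisher-information lemma: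
the Fisher information of `(X_i, Z_{i-1})` is bounded by
`(1 + 1/ε)(e^α − 1)²` times that of `(X_i, X_{i-1})` plus `(1 + ε)e^{2α}` times
that of `X_i`. Division by zero is `0` in Lean, implementing the convention that
`a²/b = 0` whenever `b = 0`. -/
theorem fisher_information_term2
    (α ε : ℝ) (hα : 0 < α) (hε : 0 < ε)
    (q : ℝ → ℝ → ℝ) (hq_meas : Measurable (Function.uncurry q))
    (hq_nonneg : ∀ z y, 0 ≤ q z y)
    (hq_int : ∀ y, ∫ z, q z y = 1)
    (hq_ldp : ∀ z y y', q z y ≤ Real.exp α * q z y')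
    (p : ℝ × ℝ → ℝ) (hp_meas : Measurable p) (hp_pos : ∀ w, 0 < p w)
    (hp_int : ∫ w : ℝ × ℝ, p w = 1)
    (pd : ℝ × ℝ → ℝ) (hpd_meas : Measurable pd)
    (hpd_int : ∀ᵐ x : ℝ, Integrable fun y => pd (x, y))
    (hFI2 : Integrable fun w : ℝ × ℝ => pd w ^ 2 / p w)
    (hFI1 : Integrable fun x : ℝ => (∫ y, pd (x, y)) ^ 2 / ∫ y, p (x, y)) :
    (∫⁻ x : ℝ, ∫⁻ z : ℝ,
        ENNReal.ofReal ((∫ y, q z y * pd (x, y)) ^ 2 / ∫ y, q z y * p (x, y))) ≤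
      ENNReal.ofReal
        ((1 + 1 / ε) * (Real.exp α - 1) ^ 2 * (∫ w : ℝ × ℝ, pd w ^ 2 / p w) +
          (1 + ε) * Real.exp (2 * α) *
            ∫ x : ℝ, (∫ y, pd (x, y)) ^ 2 / ∫ y, p (x, y)) := by
  have hp : Integrable p := .of_integral_ne_zero (by simp [hp_int])
  have hJ : 0 ≤ ∫ w, pd w ^ 2 / p w :=
    integral_nonneg fun w => div_nonneg (sq_nonneg _) (hp_pos w).le
  have hI : 0 ≤ ∫ x, (∫ y, pd (x, y)) ^ 2 / ∫ y, p (x, y) :=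
    integral_nonneg fun x => div_nonneg (sq_nonneg _) (integral_nonneg fun y => (hp_pos _).le)
  refine (fisher_information_term2_general hq_meas.aestronglyMeasurable hq_nonneg hq_int hq_ldp
    hp_pos hp hpd_meas.aestronglyMeasurable hFI2).trans (ENNReal.ofReal_le_ofReal ?_)
  rw [mul_assoc (1 + 1 / ε)]
  exact add_le_one_add_inv_mul_add_one_add_mul_exp_mul hα.le hε (mul_nonneg (sq_nonneg _) hJ) hI
end
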